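/- arXiv:1009.1565 — 2 statements merged into one kernel-verified Lean document; each statement's English description precedes it below -/
import Mathlib

section
/- Suppose a planar compactum X contains two disjoint subcontinua X₁, X₂ and three pairwise disjoint subcontinua C¹, C², C³ such that Xᵢ ∩ Cʲ ≠ ∅ for all i ∈ {1,2} and j ∈ {1,2,3}. Then X is not unshielded. -/
open Set Filter Metric Topology Function

/-- A relation on a topological space is closed if its graph is closed. -/
def ClosedRel {Y : Type*} [TopologicalSpace Y] (r : Y → Y → Prop) : Prop :=
  IsClosed {p : Y × Y | r p.1 p.2}

/-- A relation respects a family `A` of subsets if it is closed and each member of `A`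
is contained in a single class. -/
def Respects {Y : Type*} [TopologicalSpace Y] (A : Set (Set Y)) (r : Y → Y → Prop) : Prop :=
  ClosedRel r ∧ ∀ a ∈ A, ∀ x ∈ a, ∀ y ∈ a, r x y

/-- The finest closed equivalence relation respecting `A`: the intersection of all
closed equivalence relations respecting `A`. -/
def finestRel {Y : Type*} [TopologicalSpace Y] (A : Set (Set Y)) : Y → Y → Prop :=
  fun x y => ∀ r : Y → Y → Prop, Equivalence r → Respects A r → r x y

/-- A limit continuum: a subcontinuum which is the Hausdorff limit of a sequence of
pairwise disjoint subcontinua. -/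
def IsLimCont {Y : Type*} [MetricSpace Y] (C : Set Y) : Prop :=
  IsCompact C ∧ IsConnected C ∧
  ∃ F : ℕ → Set Y, (∀ n, IsCompact (F n) ∧ IsConnected (F n)) ∧
    Pairwise (Disjoint on F) ∧
    Tendsto (fun n => EMetric.hausdorffEdist (F n) C) atTop (nhds 0)

/-- Finitely Suslinian: every family of pairwise disjoint subcontinua of diameter at least
`ε > 0` is finite. -/
def FinSus (Y : Type*) [MetricSpace Y] : Prop :=
  ∀ ε : ℝ, 0 < ε → ∀ S : Set (Set Y),
    (∀ C ∈ S, IsCompact C ∧ IsConnected C ∧ ε ≤ Metric.diam C) →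
    S.Pairwise Disjoint → S.Finite

/-- A subcontinuum of the subset `Z`. -/
def SubcontIn {E : Type*} [MetricSpace E] (Z C : Set E) : Prop :=
  C ⊆ Z ∧ IsCompact C ∧ IsConnected C

/-- A limit continuum of the subset `Z`. -/
def LimContIn {E : Type*} [MetricSpace E] (Z C : Set E) : Prop :=
  SubcontIn Z C ∧ ∃ F : ℕ → Set E, (∀ n, SubcontIn Z (F n)) ∧
    Pairwise (Disjoint on F) ∧
    Tendsto (fun n => EMetric.hausdorffEdist (F n) C) atTop (nhds 0)

/-- The subset `Z` is finitely Suslinian. -/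
def FinSusIn {E : Type*} [MetricSpace E] (Z : Set E) : Prop :=
  ∀ ε : ℝ, 0 < ε → ∀ S : Set (Set E),
    (∀ C ∈ S, SubcontIn Z C ∧ ε ≤ Metric.diam C) → S.Pairwise Disjoint → S.Finite

/-- A planar compactum is unshielded if it is the boundary of the unbounded component of
its complement. -/
def Unshielded (X : Set ℂ) : Prop :=
  ∀ z, z ∉ X → ¬Bornology.IsBounded (connectedComponentIn Xᶜ z) →
    X = frontier (connectedComponentIn Xᶜ z)

/-- A nowhere vanishing continuous function on the plane of parameters has a continuous
logarithm. -/
lemma exists_continuous_log {f : ℝ × ℝ → ℂ} (hf : Continuous f) (h0 : ∀ p, f p ≠ 0) :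
    ∃ l : ℝ × ℝ → ℂ, Continuous l ∧ ∀ p, Complex.exp (l p) = f p := by
  obtain ⟨l, hl⟩ := Complex.isCoveringMapOn_exp.existsUnique_continuousMap_lifts
    ⟨f, hf⟩ (a₀ := 0) (Complex.exp_log (h0 0)) h0
  exact ⟨l, l.continuous, fun p => congrFun hl.1.2 p⟩

/-- Two continuous logarithms of the same function on the line have the same increments. -/
lemma log_increment_unique {l l' : ℝ → ℂ} (hl : Continuous l) (hl' : Continuous l') (c : ℂ)
    (h : ∀ t, Complex.exp (l t) = c * Complex.exp (l' t)) :
    l 1 - l 0 = l' 1 - l' 0 := by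
  have hc : ∀ t, Complex.exp (l t - l' t) = c := fun t => by
    rw [Complex.exp_sub, h, mul_div_assoc, div_self (Complex.exp_ne_zero _), mul_one]
  have hd : Continuous fun t => l t - l' t := hl.sub hl'
  obtain ⟨L, -, hu⟩ := Complex.isCoveringMapOn_exp.existsUnique_continuousMap_lifts
    (ContinuousMap.const ℝ c) (a₀ := 0) (hc 0) (fun _ => by
      rw [ContinuousMap.const_apply, ← hc 0]; exact Complex.exp_ne_zero _)
  have h1 := hu ⟨_, hd⟩ ⟨rfl, funext hc⟩
  have h2 := hu (ContinuousMap.const ℝ (l 0 - l' 0)) ⟨rfl, funext fun _ => hc 0⟩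
  have h3 : l 1 - l' 1 = l 0 - l' 0 := DFunLike.congr_fun (h1.trans h2.symm) 1
  linear_combination h3

lemma exists_int_of_exp_eq {x y : ℂ} (h : Complex.exp x = Complex.exp y) :
    ∃ n : ℤ, x = y + n * (2 * Real.pi * Complex.I) :=
  Complex.exp_eq_exp_iff_exists_int.1 h

/-- A drawing of the complete bipartite graph `K₃,₃` in the plane has two nonadjacent edges
which intersect. -/
theorem exists_crossing_of_K33 (a b : Fin 3 → ℂ) (γ : Fin 3 → Fin 3 → ℝ → ℂ)
    (hγ : ∀ i j, Continuous (γ i j)) (h0 : ∀ i j, γ i j 0 = a i) (h1 : ∀ i j, γ i j 1 = b j) :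
    ∃ i i' j j', i ≠ i' ∧ j ≠ j' ∧ ∃ s t, γ i j s = γ i' j' t := by
  by_contra! hne
  -- increments of logarithms along an edge seen from a vertex
  have hA : ∀ i i' j', i ≠ i' → ∃ l : ℝ → ℂ, Continuous l ∧
      ∀ t, Complex.exp (l t) = γ i' j' t - a i := by
    intro i i' j' hi
    obtain ⟨j, hj⟩ := exists_ne j'
    obtain ⟨l, hl, hl'⟩ := exists_continuous_log (f := fun p => γ i' j' p.2 - γ i j p.1)
      (by have := hγ i j; have := hγ i' j'; fun_prop)
      (fun p => sub_ne_zero.2 (hne i i' j j' hi hj p.1 p.2).symm)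
    exact ⟨fun t => l (0, t), by fun_prop, fun t => by rw [hl', h0]⟩
  have hB : ∀ j i' j', j ≠ j' → ∃ l : ℝ → ℂ, Continuous l ∧
      ∀ t, Complex.exp (l t) = γ i' j' t - b j := by
    intro j i' j' hj
    obtain ⟨i, hi⟩ := exists_ne i'
    obtain ⟨l, hl, hl'⟩ := exists_continuous_log (f := fun p => γ i' j' p.2 - γ i j p.1)
      (by have := hγ i j; have := hγ i' j'; fun_prop)
      (fun p => sub_ne_zero.2 (hne i i' j j' hi hj p.1 p.2).symm)
    exact ⟨fun t => l (1, t), by fun_prop, fun t => by rw [hl', h1]⟩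
  choose! A hAc hAe using hA
  choose! B hBc hBe using hB
  have square : ∀ i i' j j', i ≠ i' → j ≠ j' →
      (A i i' j' 1 - A i i' j' 0) - (A i' i j 1 - A i' i j 0)
        = (B j i' j' 1 - B j i' j' 0) - (B j' i j 1 - B j' i j 0) := by
    intro i i' j j' hi hj
    obtain ⟨l, hl, hl'⟩ := exists_continuous_log (f := fun p => γ i' j' p.2 - γ i j p.1)
      (by have := hγ i j; have := hγ i' j'; fun_prop)
      (fun p => sub_ne_zero.2 (hne i i' j j' hi hj p.1 p.2).symm)
    have e1 := log_increment_unique (l := A i i' j') (l' := fun t => l (0, t)) (hAc _ _ _ hi)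
      (by fun_prop) 1 (fun t => by rw [hAe _ _ _ hi, hl', h0, one_mul])
    have e2 := log_increment_unique (l := A i' i j) (l' := fun t => l (t, 0)) (hAc _ _ _ hi.symm)
      (by fun_prop) (-1) (fun t => by rw [hAe _ _ _ hi.symm, hl', h0]; ring)
    have e3 := log_increment_unique (l := B j i' j') (l' := fun t => l (1, t)) (hBc _ _ _ hj)
      (by fun_prop) 1 (fun t => by rw [hBe _ _ _ hj, hl', h1, one_mul])
    have e4 := log_increment_unique (l := B j' i j) (l' := fun t => l (t, 1)) (hBc _ _ _ hj.symm)
      (by fun_prop) (-1) (fun t => by rw [hBe _ _ _ hj.symm, hl', h1]; ring)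
    rw [e1, e2, e3, e4]
    ring
  -- comparison with a fixed choice of logarithms of the differences of vertices
  have haa : ∀ i i', i ≠ i' → a i' - a i ≠ 0 := fun i i' hi => by
    simpa [h0] using sub_ne_zero.2 (hne i i' 0 1 hi (by decide) 0 0).symm
  have hbb : ∀ j j', j ≠ j' → b j' - b j ≠ 0 := fun j j' hj => by
    simpa [h1] using sub_ne_zero.2 (hne 0 1 j j' (by decide) hj 1 1).symm
  have hab : ∀ i j, b j - a i ≠ 0 := fun i j => by
    obtain ⟨i', hi⟩ := exists_ne i
    obtain ⟨j', hj⟩ := exists_ne j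
    simpa [h0, h1] using sub_ne_zero.2 (hne i i' j' j hi.symm hj 0 1).symm
  let half : Fin 3 → Fin 3 → ℤ := fun i i' => if i < i' then 0 else 1
  have hhalf : ∀ v : Fin 3 → ℂ, (∀ i i', i ≠ i' → v i' - v i ≠ 0) → ∃ φ : Fin 3 → Fin 3 → ℂ,
      ∀ i i', i ≠ i' → φ i i' = φ i' i ∧
        Complex.exp (φ i i' + half i i' * (Real.pi * Complex.I)) = v i' - v i := by
    intro v hv
    refine ⟨fun i i' => Complex.log (v (max i i') - v (min i i')), fun i i' hi => ?_⟩
    refine ⟨by simp only [max_comm, min_comm], ?_⟩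
    rcases lt_or_gt_of_ne hi with h | h
    · simp [half, h, max_eq_right h.le, min_eq_left h.le, Complex.exp_log (hv i i' hi)]
    · simp [half, h.not_gt, max_eq_left h.le, min_eq_right h.le, Complex.exp_add,
        Complex.exp_log (hv i' i hi.symm)]
  obtain ⟨α, hα⟩ := hhalf a haa
  obtain ⟨β, hβ⟩ := hhalf b hbb
  have hn : ∀ i i' j', i ≠ i' → ∃ n : ℤ, A i i' j' 1 - A i i' j' 0
      = Complex.log (b j' - a i) - (α i i' + half i i' * (Real.pi * Complex.I))
        + n * (2 * Real.pi * Complex.I) := by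
    intro i i' j' hi
    apply exists_int_of_exp_eq
    rw [Complex.exp_sub, Complex.exp_sub, (hα i i' hi).2, hAe _ _ _ hi, hAe _ _ _ hi, h0, h1,
      Complex.exp_log (hab _ _)]
  have hm : ∀ j i' j', j ≠ j' → ∃ m : ℤ, B j i' j' 1 - B j i' j' 0
      = (β j j' + half j j' * (Real.pi * Complex.I))
        - (Complex.log (b j - a i') + Real.pi * Complex.I) + m * (2 * Real.pi * Complex.I) := by
    intro j i' j' hj
    apply exists_int_of_exp_eq
    rw [Complex.exp_sub, Complex.exp_sub, (hβ j j' hj).2, hBe _ _ _ hj, hBe _ _ _ hj, h0, h1,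
      Complex.exp_add, Complex.exp_log (hab _ _), Complex.exp_pi_mul_I, mul_neg_one, neg_sub]
  choose! n hn using hn
  choose! m hm using hm
  have parity : ∀ i i' j j', i ≠ i' → j ≠ j' →
      half i' i - half i i' + 2 * (n i i' j' - n i' i j)
        = half j j' - half j' j + 2 * (m j i' j' - m j' i j) := by
    intro i i' j j' hi hj
    have key := square i i' j j' hi hj
    rw [hn i i' j' hi, hn i' i j hi.symm, hm j i' j' hj, hm j' i j hj.symm, (hα i i' hi).1,
      (hβ j j' hj).1] at key
    have hpi : (Real.pi * Complex.I : ℂ) ≠ 0 :=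
      mul_ne_zero (by exact_mod_cast Real.pi_ne_zero) Complex.I_ne_zero
    have : ((half i' i - half i i' + 2 * (n i i' j' - n i' i j) : ℤ) : ℂ)
        = ((half j j' - half j' j + 2 * (m j i' j' - m j' i j) : ℤ) : ℂ) := by
      apply mul_right_cancel₀ hpi
      push_cast
      linear_combination key
    exact_mod_cast this
  have p01 := parity 0 1
  have p02 := parity 0 2
  have p12 := parity 1 2
  simp only [half] at p01 p02 p12
  have q1 := p01 0 1; have q2 := p01 0 2; have q3 := p01 1 2
  have q4 := p01 1 0; have q5 := p01 2 0; have q6 := p01 2 1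
  have r1 := p02 0 1; have r2 := p02 0 2; have r3 := p02 1 2
  have r4 := p02 1 0; have r5 := p02 2 0; have r6 := p02 2 1
  have s1 := p12 0 1; have s2 := p12 0 2; have s3 := p12 1 2
  have s4 := p12 1 0; have s5 := p12 2 0; have s6 := p12 2 1
  simp at q1 q2 q3 q4 q5 q6 r1 r2 r3 r4 r5 r6 s1 s2 s3 s4 s5 s6
  omega

lemma IsConnected.isPathConnected_thickening {C : Set ℂ} (hC : IsConnected C) {ε : ℝ}
    (hε : 0 < ε) : IsPathConnected (thickening ε C) := by
  refine isOpen_thickening.isConnected_iff_isPathConnected.1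
    ⟨hC.nonempty.mono (self_subset_thickening hε C), ?_⟩
  have h : thickening ε C = (fun p : ℂ × ℂ => p.1 + p.2) '' (C ×ˢ ball 0 ε) := by
    ext z
    simp only [mem_thickening_iff, mem_image, mem_prod, mem_ball_zero_iff, Prod.exists]
    constructor
    · rintro ⟨x, hx, hz⟩
      exact ⟨x, z - x, ⟨hx, by rwa [← dist_eq_norm]⟩, by ring⟩
    · rintro ⟨x, y, ⟨hx, hy⟩, rfl⟩
      exact ⟨x, hx, by simpa [dist_eq_norm] using hy⟩
  rw [h]
  exact (hC.isPreconnected.prod (convex_ball 0 ε).isPreconnected).image _ (by fun_prop)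

lemma JoinedIn.exists_continuous_real {E : Type*} [TopologicalSpace E] {S : Set E} {x y : E}
    (h : JoinedIn S x y) :
    ∃ f : ℝ → E, Continuous f ∧ f 0 = x ∧ f 1 = y ∧ range f ⊆ S ∧ IsCompact (range f) := by
  refine ⟨h.somePath.extend, h.somePath.continuous_extend, by simp, by simp, ?_, ?_⟩
  · rw [Path.extend_range]
    rintro _ ⟨t, rfl⟩
    exact h.somePath_mem t
  · rw [Path.extend_range]
    exact isCompact_range h.somePath.continuous

lemma joinedIn_of_continuous {E : Type*} [TopologicalSpace E] {S : Set E} {f : ℝ → E}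
    (hf : Continuous f) {s t : ℝ} (h : ∀ u ∈ uIcc s t, f u ∈ S) : JoinedIn S (f s) (f t) := by
  have hp : IsPathConnected (f '' uIcc s t) :=
    ((convex_uIcc s t).isPathConnected nonempty_uIcc).image hf
  exact (hp.joinedIn _ (mem_image_of_mem f left_mem_uIcc) _
    (mem_image_of_mem f right_mem_uIcc)).mono (image_subset_iff.2 h)

/-- A path from `K` to `L` contains a point at prescribed small distance from `K` from which one
can go to `K` along the path without meeting `L`, and conversely. -/
lemma exists_intermediate_point {K L : Set ℂ} (hK : IsClosed K) (hL : IsClosed L)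
    {r : ℝ} (hr : 0 < r) (hrL : ∀ y ∈ L, r < infDist y K) {f : ℝ → ℂ} (hf : Continuous f)
    (h0 : f 0 ∈ K) (h1 : f 1 ∈ L) :
    ∃ z, infDist z K = r ∧ (∃ y ∈ K, JoinedIn (range f \ L) z y) ∧
      ∃ y ∈ L, JoinedIn (range f \ K) z y := by
  obtain ⟨T₂, ⟨⟨hT₂, -⟩, hT₂L⟩, hmin⟩ := (isCompact_Icc.inter_right (hL.preimage hf)).exists_isLeast
    (s := Icc (0 : ℝ) 1 ∩ f ⁻¹' L) ⟨1, by simp, h1⟩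
  obtain ⟨T₁, ⟨⟨hT₁, hT₁₂⟩, hT₁K⟩, hmax⟩ :=
    (isCompact_Icc.inter_right (hK.preimage hf)).exists_isGreatest
      (s := Icc 0 T₂ ∩ f ⁻¹' K) ⟨0, ⟨le_rfl, hT₂⟩, h0⟩
  rw [mem_preimage] at hT₁K
  have hT₂1 : T₂ ≤ 1 := hmin ⟨by simp, h1⟩
  obtain ⟨s, ⟨hs₁, hs₂⟩, hs⟩ := intermediate_value_Icc hT₁₂
    ((continuous_infDist_pt K).comp hf).continuousOn
    (show r ∈ Icc (infDist (f T₁) K) (infDist (f T₂) K) from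
      ⟨by rw [infDist_zero_of_mem hT₁K]; exact hr.le, (hrL _ hT₂L).le⟩)
  simp only [Function.comp_apply] at hs
  have hs₁' : T₁ ≠ s := by
    rintro rfl
    rw [infDist_zero_of_mem hT₁K] at hs
    exact hr.ne hs
  have hs₂' : s ≠ T₂ := by
    rintro rfl
    exact (hrL _ hT₂L).ne' hs
  have hs₁ := lt_of_le_of_ne hs₁ hs₁'
  have hs₂ := lt_of_le_of_ne hs₂ hs₂'
  refine ⟨f s, hs, ⟨f T₁, hT₁K, joinedIn_of_continuous hf fun u hu => ⟨mem_range_self u, ?_⟩⟩,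
    ⟨f T₂, hT₂L, joinedIn_of_continuous hf fun u hu => ⟨mem_range_self u, ?_⟩⟩⟩
  · rw [uIcc_of_ge hs₁.le] at hu
    intro hu'
    linarith [hmin ⟨⟨hT₁.trans hu.1, by linarith [hu.2]⟩, hu'⟩, hu.2]
  · rw [uIcc_of_le hs₂.le] at hu
    intro hu'
    linarith [hmax ⟨⟨by linarith [hu.1], hu.2⟩, hu'⟩, hu.1]

/-- A continuum meeting two disjoint compact sets `K` and `L` contains a point from which each
of them can be reached, arbitrarily close to the continuum, without meeting the other. -/
theorem exists_point_between {C K L : Set ℂ} (hC : IsCompact C) (hC' : IsConnected C)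
    (hK : IsClosed K) (hL : IsCompact L) (hKL : Disjoint K L) (hKC : (K ∩ C).Nonempty)
    (hLC : (L ∩ C).Nonempty) :
    ∃ c ∈ C, ∀ ε > 0, (∃ y ∈ K, JoinedIn (thickening ε C \ L) c y) ∧
      ∃ y ∈ L, JoinedIn (thickening ε C \ K) c y := by
  obtain ⟨x, hxK, hxC⟩ := hKC
  obtain ⟨y, hyL, hyC⟩ := hLC
  have hKne : K.Nonempty := ⟨x, hxK⟩
  obtain ⟨r, hr, hrL⟩ : ∃ r > 0, ∀ y ∈ L, r < infDist y K := by
    obtain ⟨y₀, hy₀, hmin⟩ := hL.exists_isMinOn ⟨y, hyL⟩ (continuous_infDist_pt K).continuousOn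
    have hpos : 0 < infDist y₀ K :=
      (hK.notMem_iff_infDist_pos hKne).1 (hKL.notMem_of_mem_right hy₀)
    exact ⟨infDist y₀ K / 2, half_pos hpos, fun z hz => (half_lt_self hpos).trans_le (hmin hz)⟩
  have hz : ∀ n : ℕ, ∃ z, infDist z K = r ∧
      (∃ y ∈ K, JoinedIn (thickening (1 / (n + 1 : ℝ)) C \ L) z y) ∧
      ∃ y ∈ L, JoinedIn (thickening (1 / (n + 1 : ℝ)) C \ K) z y := by
    intro n
    have hn : (0 : ℝ) < 1 / (n + 1 : ℝ) := Nat.one_div_pos_of_nat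
    obtain ⟨f, hf, hf0, hf1, hfr, -⟩ := ((hC'.isPathConnected_thickening hn).joinedIn x
      (self_subset_thickening hn C hxC) y
      (self_subset_thickening hn C hyC)).exists_continuous_real
    obtain ⟨z, hz, ⟨u, hu, hu'⟩, v, hv, hv'⟩ := exists_intermediate_point hK hL.isClosed hr hrL hf
      (hf0 ▸ hxK) (hf1 ▸ hyL)
    exact ⟨z, hz, ⟨u, hu, hu'.mono (sdiff_subset_sdiff_left hfr)⟩,
      v, hv, hv'.mono (sdiff_subset_sdiff_left hfr)⟩
  choose z hzr hzK hzL using hz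
  have hzC : ∀ n : ℕ, z n ∈ thickening (1 / (n + 1 : ℝ)) C := fun n => by
    obtain ⟨y, -, hy⟩ := hzK n
    exact hy.source_mem.1
  obtain ⟨c, -, φ, hφ, hlim⟩ := (hC.cthickening (r := 1)).tendsto_subseq (x := z) fun n =>
    thickening_subset_cthickening_of_le (by
      rw [div_le_one (by positivity)]; linarith [(Nat.cast_nonneg n : (0 : ℝ) ≤ n)]) C (hzC n)
  have hφ0 : Tendsto (fun n => 1 / ((φ n : ℝ) + 1)) atTop (𝓝 0) :=
    tendsto_one_div_add_atTop_nhds_zero_nat.comp hφ.tendsto_atTop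
  have hcC : c ∈ C := by
    rw [hC.isClosed.mem_iff_infDist_zero hC'.nonempty]
    refine tendsto_nhds_unique (((continuous_infDist_pt C).tendsto c).comp hlim) ?_
    refine squeeze_zero (fun _ => infDist_nonneg) (fun n => ?_) hφ0
    exact ((mem_thickening_iff_infDist_lt hC'.nonempty).1 (hzC (φ n))).le
  have hcr : infDist c K = r := by
    refine tendsto_nhds_unique (((continuous_infDist_pt K).tendsto c).comp hlim) ?_
    exact tendsto_const_nhds.congr fun n => (hzr (φ n)).symm
  have hcK : c ∉ K := fun h => by rw [infDist_zero_of_mem h] at hcr; exact hr.ne hcr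
  have hcL : c ∉ L := fun h => (hrL c h).ne' hcr
  refine ⟨c, hcC, fun ε hε => ?_⟩
  obtain ⟨η, hη, hηs⟩ := Metric.mem_nhds_iff.1 (((hK.union hL.isClosed).isOpen_compl.inter
    (isOpen_thickening (δ := ε) (E := C))).mem_nhds
      ⟨by simp [hcK, hcL], self_subset_thickening hε C hcC⟩)
  obtain ⟨n, hn, hn'⟩ := ((hlim.eventually (ball_mem_nhds c hη)).and
    (hφ0.eventually (gt_mem_nhds hε))).exists
  have hseg : JoinedIn (ball c η) c (z (φ n)) :=
    ((convex_ball c η).isPathConnected ⟨c, mem_ball_self hη⟩).joinedIn _ (mem_ball_self hη) _ hn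
  have hmono := thickening_mono hn'.le C
  constructor
  · obtain ⟨y, hy, hy'⟩ := hzK (φ n)
    have hs : ball c η ⊆ thickening ε C \ L := fun w hw =>
      ⟨(hηs hw).2, fun h => (hηs hw).1 (.inr h)⟩
    exact ⟨y, hy, (hseg.mono hs).trans (hy'.mono (sdiff_subset_sdiff_left hmono))⟩
  · obtain ⟨y, hy, hy'⟩ := hzL (φ n)
    have hs : ball c η ⊆ thickening ε C \ K := fun w hw =>
      ⟨(hηs hw).2, fun h => (hηs hw).1 (.inl h)⟩
    exact ⟨y, hy, (hseg.mono hs).trans (hy'.mono (sdiff_subset_sdiff_left hmono))⟩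

lemma eventually_disjoint_thickening {A B : Set ℂ} (hA : IsCompact A) (hB : IsClosed B)
    (h : Disjoint A B) : ∀ᶠ ε in 𝓝[>] (0 : ℝ), Disjoint (thickening ε A) (thickening ε B) := by
  obtain ⟨δ, hδ, hd⟩ := h.exists_thickenings hA hB
  filter_upwards [Ioo_mem_nhdsGT hδ] with ε hε
  exact hd.mono (thickening_mono hε.2.le A) (thickening_mono hε.2.le B)

/-- A domain in the complement of a generalized `θ`-curve does not accumulate at all the points
of the three sides. -/
theorem not_subset_closure_of_theta {K L U : Set ℂ} {C : Fin 3 → Set ℂ}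
    (hK : IsCompact K) (hK' : IsConnected K) (hL : IsCompact L) (hL' : IsConnected L)
    (hC : ∀ j, IsCompact (C j)) (hC' : ∀ j, IsConnected (C j)) (hKL : Disjoint K L)
    (hCC : ∀ j j', j ≠ j' → Disjoint (C j) (C j')) (hKC : ∀ j, (K ∩ C j).Nonempty)
    (hLC : ∀ j, (L ∩ C j).Nonempty) (hU : IsOpen U) (hU' : IsConnected U) (hUK : Disjoint U K)
    (hUL : Disjoint U L) (hUC : ∀ j, Disjoint U (C j)) : ¬ ∀ j, C j ⊆ closure U := by
  intro hcl
  choose c hcC hc using fun j =>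
    exists_point_between (hC j) (hC' j) hK.isClosed hL hKL (hKC j) (hLC j)
  obtain ⟨p, hp⟩ := hU'.nonempty
  -- edges from `p` through `U`
  have hQ : ∀ j, ∃ f : ℝ → ℂ, Continuous f ∧ f 0 = p ∧ f 1 = c j ∧ IsCompact (range f) ∧
      Disjoint K (range f) ∧ Disjoint L (range f) ∧ ∀ j', j ≠ j' → Disjoint (C j') (range f) := by
    intro j
    have hcK : c j ∉ K := by
      obtain ⟨y, -, hy⟩ := (hc j 1 one_pos).2
      exact hy.source_mem.2
    have hcL : c j ∉ L := by
      obtain ⟨y, -, hy⟩ := (hc j 1 one_pos).1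
      exact hy.source_mem.2
    have hV : ∀ᶠ w in 𝓝 (c j), w ∉ K ∧ w ∉ L ∧ ∀ j', j ≠ j' → w ∉ C j' := by
      refine (hK.isClosed.isOpen_compl.eventually_mem hcK).and
        ((hL.isClosed.isOpen_compl.eventually_mem hcL).and (eventually_all.2 fun j' => ?_))
      by_cases h : j = j'
      · exact .of_forall fun _ h' => absurd h h'
      · filter_upwards [(hC j').isClosed.isOpen_compl.eventually_mem
          ((hCC j j' h).notMem_of_mem_left (hcC j))] with w hw _ using hw
    obtain ⟨ρ, hρ, hV⟩ := Metric.eventually_nhds_iff_ball.1 hV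
    obtain ⟨u, hub, huU⟩ := mem_closure_iff_nhds.1 (hcl j (hcC j)) _ (ball_mem_nhds (c j) hρ)
    have hj : JoinedIn (U ∪ ball (c j) ρ) p (c j) :=
      (((hU.isConnected_iff_isPathConnected.1 hU').joinedIn p hp u huU).mono
        subset_union_left).trans ((((convex_ball (c j) ρ).isPathConnected
          ⟨u, hub⟩).joinedIn u hub _ (mem_ball_self hρ)).mono subset_union_right)
    obtain ⟨f, hf, hf0, hf1, hfr, hfc⟩ := hj.exists_continuous_real
    refine ⟨f, hf, hf0, hf1, hfc, ?_, ?_, fun j' hj' => ?_⟩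
    · exact (disjoint_union_left.2 ⟨hUK, disjoint_left.2 fun w hw => (hV w hw).1⟩).symm.mono_right
        hfr
    · exact (disjoint_union_left.2
        ⟨hUL, disjoint_left.2 fun w hw => (hV w hw).2.1⟩).symm.mono_right hfr
    · exact (disjoint_union_left.2
        ⟨hUC j', disjoint_left.2 fun w hw => (hV w hw).2.2 j' hj'⟩).symm.mono_right hfr
  choose q hq hq0 hq1 hqc hqK hqL hqC using hQ
  -- the scale of the parts of the edges along the sides
  obtain ⟨ε, ⟨hεC, hεq⟩, hε⟩ : ∃ ε : ℝ, ((∀ j j', j ≠ j' →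
      Disjoint (thickening ε (C j)) (thickening ε (C j'))) ∧ ∀ j j', j ≠ j' →
      Disjoint (thickening ε (C j')) (thickening ε (range (q j)))) ∧ 0 < ε := by
    refine Eventually.exists (f := 𝓝[>] (0 : ℝ)) (Eventually.and (.and ?_ ?_) eventually_mem_nhdsWithin)
    · simp only [eventually_all]
      exact fun j j' h => eventually_disjoint_thickening (hC j) (hC j').isClosed (hCC j j' h)
    · simp only [eventually_all]
      exact fun j j' h => eventually_disjoint_thickening (hC j') (hqc j).isClosed (hqC j j' h)
  have hεq' : ∀ j j', j ≠ j' → Disjoint (thickening ε (C j')) (range (q j)) := fun j j' h =>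
    (hεq j j' h).mono_right (self_subset_thickening hε _)
  have hRK : ∀ j, ∃ f : ℝ → ℂ, f 0 ∈ K ∧ f 1 = c j ∧ Continuous f ∧
      range f ⊆ thickening ε (C j) \ L ∧ IsCompact (range f) := fun j => by
    obtain ⟨y, hy, hy'⟩ := (hc j ε hε).1
    obtain ⟨f, hf, hf0, hf1, hfr, hfc⟩ := hy'.symm.exists_continuous_real
    exact ⟨f, hf0 ▸ hy, hf1, hf, hfr, hfc⟩
  have hRL : ∀ j, ∃ f : ℝ → ℂ, f 0 ∈ L ∧ f 1 = c j ∧ Continuous f ∧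
      range f ⊆ thickening ε (C j) \ K ∧ IsCompact (range f) := fun j => by
    obtain ⟨y, hy, hy'⟩ := (hc j ε hε).2
    obtain ⟨f, hf, hf0, hf1, hfr, hfc⟩ := hy'.symm.exists_continuous_real
    exact ⟨f, hf0 ▸ hy, hf1, hf, hfr, hfc⟩
  choose k hk0 hk1 hk hkr hkc using hRK
  choose l hl0 hl1 hl hlr hlc using hRL
  -- the scale of the parts of the edges along `K` and `L`
  obtain ⟨δ, ⟨hδKL, hδqK, hδqL, hδlK, hδkL⟩, hδ⟩ : ∃ δ : ℝ, (
      Disjoint (thickening δ K) (thickening δ L) ∧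
      (∀ j, Disjoint (thickening δ K) (thickening δ (range (q j)))) ∧
      (∀ j, Disjoint (thickening δ L) (thickening δ (range (q j)))) ∧
      (∀ j, Disjoint (thickening δ K) (thickening δ (range (l j)))) ∧
      ∀ j, Disjoint (thickening δ L) (thickening δ (range (k j)))) ∧ 0 < δ := by
    refine Eventually.exists (f := 𝓝[>] (0 : ℝ)) (Eventually.and (.and ?_ (.and ?_ (.and ?_ (.and ?_ ?_))))
      eventually_mem_nhdsWithin)
    · exact eventually_disjoint_thickening hK hL.isClosed hKL
    · exact eventually_all.2 fun j => eventually_disjoint_thickening hK (hqc j).isClosed (hqK j)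
    · exact eventually_all.2 fun j => eventually_disjoint_thickening hL (hqc j).isClosed (hqL j)
    · exact eventually_all.2 fun j => eventually_disjoint_thickening hK (hlc j).isClosed
        (disjoint_right.2 fun w hw => (hlr j hw).2)
    · exact eventually_all.2 fun j => eventually_disjoint_thickening hL (hkc j).isClosed
        (disjoint_right.2 fun w hw => (hkr j hw).2)
  have extend : ∀ {M : Set ℂ} {x : ℂ} {f : ℝ → ℂ}, IsConnected M → x ∈ M → f 0 ∈ M →
      Continuous f → ∃ g : ℝ → ℂ, Continuous g ∧ g 0 = x ∧ g 1 = f 1 ∧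
        range g ⊆ thickening δ M ∪ range f := by
    intro M x f hM hx hf0 hf
    have h := (((hM.isPathConnected_thickening hδ).joinedIn x (self_subset_thickening hδ M hx)
      (f 0) (self_subset_thickening hδ M hf0)).mono
        (subset_union_left (t := range f))).trans ((joinedIn_of_continuous (s := 0) (t := 1) hf
          fun u _ => mem_range_self u).mono subset_union_right)
    obtain ⟨g, hg, hg0, hg1, hgr, -⟩ := h.exists_continuous_real
    exact ⟨g, hg, hg0, hg1, hgr⟩
  obtain ⟨x, hx⟩ := hK'.nonempty
  obtain ⟨y, hy⟩ := hL'.nonempty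
  choose g hg hg0 hg1 hgr using fun j => extend hK' hx (hk0 j) (hk j)
  choose h hh hh0 hh1 hhr using fun j => extend hL' hy (hl0 j) (hl j)
  have hgh : ∀ j j', j ≠ j' → Disjoint (range (g j)) (range (h j')) := fun j j' hj => by
    refine Disjoint.mono (hgr j) (hhr j') ?_
    simp only [disjoint_union_left, disjoint_union_right]
    exact ⟨⟨hδKL, ((hδkL j).mono_right (self_subset_thickening hδ _)).symm⟩,
      (hδlK j').mono_right (self_subset_thickening hδ _),
      (hεC j j' hj).mono ((hkr j).trans sdiff_subset) ((hlr j').trans sdiff_subset)⟩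
  have hgq : ∀ j j', j ≠ j' → Disjoint (range (g j)) (range (q j')) := fun j j' hj => by
    refine Disjoint.mono_left (hgr j) (disjoint_union_left.2
      ⟨(hδqK j').mono_right (self_subset_thickening hδ _), ?_⟩)
    exact (hεq' j' j hj.symm).mono_left ((hkr j).trans sdiff_subset)
  have hhq : ∀ j j', j ≠ j' → Disjoint (range (h j)) (range (q j')) := fun j j' hj => by
    refine Disjoint.mono_left (hhr j) (disjoint_union_left.2
      ⟨(hδqL j').mono_right (self_subset_thickening hδ _), ?_⟩)
    exact (hεq' j' j hj.symm).mono_left ((hlr j).trans sdiff_subset)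
  obtain ⟨i, i', j, j', hi, hj, s, t, hst⟩ := exists_crossing_of_K33 ![x, y, p] c ![g, h, q]
    (fun i j => by fin_cases i <;> simp [hg, hh, hq])
    (fun i j => by fin_cases i <;> simp [hg0, hh0, hq0])
    (fun i j => by fin_cases i <;> simp [hg1, hh1, hq1, hk1, hl1])
  have cross : ∀ {u v : Fin 3 → ℝ → ℂ}, (∀ j j', j ≠ j' → Disjoint (range (u j)) (range (v j'))) →
      ∀ {j j'} {s t : ℝ}, j ≠ j' → u j s ≠ v j' t := fun H _ _ s t hj e =>
    disjoint_left.1 (H _ _ hj) (mem_range_self s) (e ▸ mem_range_self t)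
  fin_cases i <;> fin_cases i' <;> first | exact hi rfl | skip
  · exact cross hgh hj hst
  · exact cross hgq hj hst
  · exact cross hgh hj.symm hst.symm
  · exact cross hhq hj hst
  · exact cross hgq hj.symm hst.symm
  · exact cross hhq hj.symm hst.symm

/-- The complement of a bounded plane set has an unbounded component. -/
lemma exists_unbounded_component {X : Set ℂ} (hX : Bornology.IsBounded X) :
    ∃ z ∉ X, ¬ Bornology.IsBounded (connectedComponentIn Xᶜ z) := by
  obtain ⟨R, hR, hXR⟩ := hX.subset_ball_lt 0 0
  have himage : Complex.exp '' {w | Real.log R < w.re} = (closedBall (0 : ℂ) R)ᶜ := by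
    ext z
    simp only [mem_image, mem_ofPred_eq, mem_compl_iff, mem_closedBall_zero_iff, not_le]
    constructor
    · rintro ⟨w, hw, rfl⟩
      rw [Complex.norm_exp]
      exact (Real.log_lt_iff_lt_exp hR).1 hw
    · intro hz
      have hz0 : z ≠ 0 := norm_pos_iff.1 (hR.trans hz)
      exact ⟨Complex.log z, by rw [Complex.log_re]; exact Real.log_lt_log hR hz,
        Complex.exp_log hz0⟩
  have hconn : IsPreconnected (closedBall (0 : ℂ) R)ᶜ := by
    rw [← himage]
    exact (convex_halfSpace_re_gt _).isPreconnected.image _ Complex.continuous_exp.continuousOn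
  have hsub : (closedBall (0 : ℂ) R)ᶜ ⊆ Xᶜ :=
    compl_subset_compl.2 (hXR.trans ball_subset_closedBall)
  have hnb : ¬ Bornology.IsBounded (closedBall (0 : ℂ) R)ᶜ := fun h =>
    NormedSpace.unbounded_univ ℝ ℂ (by
      rw [← union_compl_self (closedBall (0 : ℂ) R)]
      exact isBounded_closedBall.union h)
  obtain ⟨z, hz⟩ : ((closedBall (0 : ℂ) R)ᶜ).Nonempty := by
    by_contra he
    rw [not_nonempty_iff_eq_empty] at he
    exact hnb (he ▸ Bornology.isBounded_empty)
  exact ⟨z, hsub hz, fun h => hnb (h.subset (hconn.subset_connectedComponentIn hz hsub))⟩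

/-- a planar compactum containing two disjoint subcontinua each meeting three
pairwise disjoint subcontinua is not unshielded (a generalized `θ`-curve argument). -/
theorem theta_not_unshielded
    (X : Set ℂ) (hX : IsCompact X)
    (X1 X2 C1 C2 C3 : Set ℂ)
    (hX1 : SubcontIn X X1) (hX2 : SubcontIn X X2)
    (hX12 : Disjoint X1 X2)
    (hC1 : SubcontIn X C1) (hC2 : SubcontIn X C2) (hC3 : SubcontIn X C3)
    (hC12 : Disjoint C1 C2) (hC13 : Disjoint C1 C3) (hC23 : Disjoint C2 C3)
    (h11 : (X1 ∩ C1).Nonempty) (h12 : (X1 ∩ C2).Nonempty) (h13 : (X1 ∩ C3).Nonempty)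
    (h21 : (X2 ∩ C1).Nonempty) (h22 : (X2 ∩ C2).Nonempty) (h23 : (X2 ∩ C3).Nonempty) :
    ¬ Unshielded X := by
  intro hun
  obtain ⟨z, hz, hzu⟩ := exists_unbounded_component hX.isBounded
  have hfr := hun z hz hzu
  have hsub : connectedComponentIn Xᶜ z ⊆ Xᶜ := connectedComponentIn_subset _ _
  have hd : ∀ {S : Set ℂ}, S ⊆ X → Disjoint (connectedComponentIn Xᶜ z) S := fun hS =>
    disjoint_left.2 fun w hw hwS => hsub hw (hS hwS)
  have hcl : ∀ {S : Set ℂ}, S ⊆ X → S ⊆ closure (connectedComponentIn Xᶜ z) := fun hS =>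
    (hS.trans hfr.subset).trans frontier_subset_closure
  refine not_subset_closure_of_theta (C := ![C1, C2, C3]) hX1.2.1 hX1.2.2 hX2.2.1 hX2.2.2 ?_ ?_
    hX12 ?_ ?_ ?_ hX.isClosed.isOpen_compl.connectedComponentIn
    (isConnected_connectedComponentIn_iff.2 hz) (hd hX1.1) (hd hX2.1) ?_ ?_
  · simp [Fin.forall_fin_succ, hC1.2.1, hC2.2.1, hC3.2.1]
  · simp [Fin.forall_fin_succ, hC1.2.2, hC2.2.2, hC3.2.2]
  · simp [Fin.forall_fin_succ, hC12, hC13, hC23, hC12.symm, hC13.symm, hC23.symm]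
  · simp [Fin.forall_fin_succ, h11, h12, h13]
  · simp [Fin.forall_fin_succ, h21, h22, h23]
  · simp [Fin.forall_fin_succ, hd hC1.1, hd hC2.1, hd hC3.1]
  · simp [Fin.forall_fin_succ, hcl hC1.1, hcl hC2.1, hcl hC3.1]
end

section
/- Let X ⊂ ℂ be an unshielded compactum and FS∼ the finest closed equivalence relation respecting the family of limit continua of X. Then the quotient map m_X : X → X/FS∼ is the finest finitely Suslinian monotone model of X: X/FS∼ is finitely Suslinian, m_X is monotone, and every monotone continuous surjection φ from X onto a finitely Suslinian compactum factors as φ = g ∘ m_X for some continuous map g. -/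
open Set Filter Metric Topology Function

open scoped unitInterval

/-- Two continuous logarithms of the same function on a connected space differ by a constant. -/
theorem sub_eq_sub_of_exp_eq {A : Type*} [TopologicalSpace A] [PreconnectedSpace A] {F G : A → ℂ}
    (hF : Continuous F) (hG : Continuous G) (h : ∀ x, Complex.exp (F x) = Complex.exp (G x))
    (x y : A) : F x - F y = G x - G y := by
  have key : F = fun z => G z + (F y - G y) := by
    refine Complex.isCoveringMap_exp.eq_of_comp_eq hF (by fun_prop) (funext fun z => ?_) y
      (by ring)
    refine Subtype.ext ?_
    simp [Complex.exp_add, Complex.exp_sub, h]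
  have := congrFun key x
  rw [this]; ring

theorem exists_continuous_log_s11 {A : Type*} [TopologicalSpace A] [SimplyConnectedSpace A]
    [LocallyPathConnectedSpace A] {f : A → ℂ} (hf : Continuous f) (h0 : ∀ x, f x ≠ 0) :
    ∃ F : A → ℂ, Continuous F ∧ ∀ x, Complex.exp (F x) = f x := by
  obtain ⟨a⟩ : Nonempty A := inferInstance
  obtain ⟨F, ⟨-, hF⟩, -⟩ := Complex.isCoveringMapOn_exp.existsUnique_continuousMap_lifts
    ⟨f, hf⟩ (a₀ := a) (Complex.exp_log (h0 a)) h0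
  exact ⟨F, F.continuous, fun x => congrFun hF x⟩

/-- The total change of a continuous logarithm of `g` along the unit interval. -/
noncomputable def logIncrement (g : I → ℂ) : ℂ :=
  open Classical in
  if h : ∃ F : I → ℂ, Continuous F ∧ ∀ t, Complex.exp (F t) = g t then
    h.choose 1 - h.choose 0 else 0

theorem logIncrement_eq {g F : I → ℂ} (hF : Continuous F) (h : ∀ t, Complex.exp (F t) = g t) :
    logIncrement g = F 1 - F 0 := by
  have hex : ∃ F : I → ℂ, Continuous F ∧ ∀ t, Complex.exp (F t) = g t := ⟨F, hF, h⟩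
  rw [logIncrement, dif_pos hex]
  exact sub_eq_sub_of_exp_eq hex.choose_spec.1 hF (fun t => by rw [hex.choose_spec.2, h]) _ _

/-- A logarithm of `e s - e' t` on the square `I × I` for paths with disjoint images. -/
theorem exists_log_sub {P Q P' Q' : ℂ} (e : Path P Q) (e' : Path P' Q')
    (h : Disjoint (range e) (range e')) :
    ∃ F : I → I → ℂ, Continuous (fun p : I × I => F p.1 p.2) ∧
      ∀ s t, Complex.exp (F s t) = e s - e' t := by
  obtain ⟨F, hF, hF'⟩ := exists_continuous_log_s11 (A := ℝ × ℝ)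
    (f := fun p => e.extend p.1 - e'.extend p.2) (by fun_prop) (fun p hp => by
      rw [sub_eq_zero] at hp
      refine Set.disjoint_left.1 h (?_ : e.extend p.1 ∈ _) ?_
      · exact e.extend_range ▸ mem_range_self _
      · rw [hp]; exact e'.extend_range ▸ mem_range_self _)
  exact ⟨fun s t => F (s, t), by fun_prop, fun s t => by simp [hF']⟩

theorem logIncrement_sub_logIncrement {P Q P' Q' : ℂ} (e : Path P Q) (e' : Path P' Q')
    (h : Disjoint (range e) (range e')) :
    logIncrement (fun t => e t - Q') - logIncrement (fun t => e t - P') =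
      logIncrement (fun t => e' t - Q) - logIncrement (fun t => e' t - P) := by
  obtain ⟨F, hF, hF'⟩ := exists_log_sub e e' h
  have h1 : ∀ t, Continuous fun s => F s t := fun t => hF.comp (by fun_prop : Continuous (·, t))
  have h2 : ∀ s, Continuous fun t => F s t := fun s => hF.comp (by fun_prop : Continuous (s, ·))
  have h3 : ∀ s t, Complex.exp (F s t + Real.pi * Complex.I) = e' t - e s := fun s t => by
    rw [Complex.exp_add, hF', Complex.exp_pi_mul_I]; ring
  rw [logIncrement_eq (h1 1) (fun s => by simp [hF']),
    logIncrement_eq (h1 0) (fun s => by simp [hF']),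
    logIncrement_eq ((h2 1).add_const _) (fun s => by rw [h3, e.target]),
    logIncrement_eq ((h2 0).add_const _) (fun s => by rw [h3, e.source])]
  ring

theorem exists_int_logIncrement {P Q v : ℂ} (e : Path P Q) (hv : v ∉ range e) :
    ∃ n : ℤ, logIncrement (fun t => e t - v) =
      Complex.log (Q - v) - Complex.log (P - v) + n * (2 * Real.pi * Complex.I) := by
  obtain ⟨F, hF, hF'⟩ := exists_log_sub e (Path.refl v) (by simpa using hv)
  have h1 : Continuous fun s => F s 0 := hF.comp (by fun_prop : Continuous (·, (0 : I)))
  rw [logIncrement_eq h1 (fun s => by simp [hF'])]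
  have hQ : Q - v ≠ 0 := fun h => hv ⟨1, by simpa [sub_eq_zero] using h⟩
  have hP : P - v ≠ 0 := fun h => hv ⟨0, by simpa [sub_eq_zero] using h⟩
  have : Complex.exp (F 1 0 - F 0 0) = Complex.exp (Complex.log (Q - v) - Complex.log (P - v)) := by
    simp [Complex.exp_sub, hF', Complex.exp_log hQ, Complex.exp_log hP]
  simpa using Complex.exp_eq_exp_iff_exists_int.1 this

theorem exists_int_log_neg {u v : ℂ} (h : u ≠ v) :
    ∃ n : ℤ, Complex.log (v - u) - Complex.log (u - v) = (2 * n + 1) * (Real.pi * Complex.I) := by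
  have : Complex.exp (Complex.log (v - u)) =
      Complex.exp (Complex.log (u - v) + Real.pi * Complex.I) := by
    rw [Complex.exp_add, Complex.exp_log (sub_ne_zero.2 h), Complex.exp_log (sub_ne_zero.2 h.symm),
      Complex.exp_pi_mul_I]
    ring
  obtain ⟨n, hn⟩ := Complex.exp_eq_exp_iff_exists_int.1 this
  exact ⟨n, by rw [hn]; ring⟩

/-- The complete bipartite graph `K₃,₃` cannot be drawn in the plane so that independent edges are
disjoint. -/
theorem not_planar_K33 {a b : Fin 3 → ℂ} (e : ∀ i j, Path (a i) (b j))
    (h : ∀ i j k l, i ≠ k → j ≠ l → Disjoint (range (e i j)) (range (e k l))) : False := by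
  have ha : ∀ i j k l, i ≠ k → j ≠ l → a k ∉ range (e i j) := fun i j k l hik hjl hm =>
    (h i j k l hik hjl).le_bot ⟨hm, 0, by simp⟩
  have hb : ∀ i j k l, i ≠ k → j ≠ l → b l ∉ range (e i j) := fun i j k l hik hjl hm =>
    (h i j k l hik hjl).le_bot ⟨hm, 1, by simp⟩
  have other : ∀ i : Fin 3, ∃ k, i ≠ k := by decide
  have hA : ∀ i j k, i ≠ k → a k ∉ range (e i j) := fun i j k hik =>
    let ⟨l, hl⟩ := other j; ha i j k l hik hl
  have hB : ∀ i j l, j ≠ l → b l ∉ range (e i j) := fun i j l hjl =>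
    let ⟨k, hk⟩ := other i; hb i j k l hk hjl
  have hab : ∀ i j, a i ≠ b j := fun i j hij => by
    obtain ⟨l, hl⟩ := other j
    exact hB i l j hl.symm ⟨0, by simpa using hij⟩
  have haa : ∀ i k, i ≠ k → a i ≠ a k := fun i k hik h' => hA i 0 k hik ⟨0, by simpa using h'⟩
  have hbb : ∀ j l, j ≠ l → b j ≠ b l := fun j l hjl h' => hB 0 j l hjl ⟨1, by simpa using h'⟩
  have na : ∀ i j k, ∃ n : ℤ, i ≠ k → logIncrement (fun t => e i j t - a k) =
      Complex.log (b j - a k) - Complex.log (a i - a k) + n * (2 * Real.pi * Complex.I) :=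
    fun i j k => by
      by_cases hik : i = k
      · exact ⟨0, fun h => absurd hik h⟩
      · exact (exists_int_logIncrement _ (hA i j k hik)).imp fun n hn _ => hn
  have nb : ∀ i j l, ∃ n : ℤ, j ≠ l → logIncrement (fun t => e i j t - b l) =
      Complex.log (b j - b l) - Complex.log (a i - b l) + n * (2 * Real.pi * Complex.I) :=
    fun i j l => by
      by_cases hjl : j = l
      · exact ⟨0, fun h => absurd hjl h⟩
      · exact (exists_int_logIncrement _ (hB i j l hjl)).imp fun n hn _ => hn
  have log_neg : ∀ u v : ℂ, ∃ n : ℤ, u ≠ v → Complex.log (v - u) - Complex.log (u - v) =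
      (2 * n + 1) * (Real.pi * Complex.I) := fun u v => by
    by_cases huv : u = v
    · exact ⟨0, fun h => absurd huv h⟩
    · exact (exists_int_log_neg huv).imp fun n hn _ => hn
  choose na hna using na
  choose nb hnb using nb
  choose s hs using log_neg
  have hpi : (Real.pi : ℂ) * Complex.I ≠ 0 := by simp [Real.pi_ne_zero]
  have hanti : ∀ j l, j ≠ l → s (b j) (b l) + s (b l) (b j) = -1 := fun j l hjl => by
    have h1 := hs _ _ (hbb j l hjl)
    have h2 := hs _ _ (hbb l j hjl.symm)
    have h3 : ((2 * (s (b j) (b l) + s (b l) (b j)) + 2 : ℤ) : ℂ) * (Real.pi * Complex.I) = 0 := by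
      push_cast; linear_combination -h1 - h2
    have h4 := Int.cast_eq_zero.1 ((mul_eq_zero.1 h3).resolve_right hpi)
    omega
  have key : ∀ i j k l, i ≠ k → j ≠ l → nb i j l - na i j k - nb k l j + na k l i =
      s (b j) (b l) + s (a k) (b j) - s (a i) (b l) + s (a i) (a k) + 1 := fun i j k l hik hjl => by
    have h0 := logIncrement_sub_logIncrement (e i j) (e k l) (h i j k l hik hjl)
    rw [hna _ _ _ hik, hnb _ _ _ hjl, hna _ _ _ hik.symm, hnb _ _ _ hjl.symm] at h0
    have h1 := hs _ _ (hbb j l hjl)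
    have h2 := hs _ _ (hab k j)
    have h3 := hs _ _ (hab i l)
    have h4 := hs _ _ (haa i k hik)
    have h5 : ((2 * (nb i j l - na i j k - nb k l j + na k l i - (s (b j) (b l) + s (a k) (b j) -
        s (a i) (b l) + s (a i) (a k) + 1)) : ℤ) : ℂ) * (Real.pi * Complex.I) = 0 := by
      push_cast; linear_combination h0 + h1 + h2 - h3 + h4
    have h6 := Int.cast_eq_zero.1 ((mul_eq_zero.1 h5).resolve_right hpi)
    omega
  have k01 := fun j l (hjl : j ≠ l) => key 0 j 1 l (by decide) hjl
  have k02 := fun j l (hjl : j ≠ l) => key 0 j 2 l (by decide) hjl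
  have k12 := fun j l (hjl : j ≠ l) => key 1 j 2 l (by decide) hjl
  have h01 := hanti 0 1 (by decide)
  have h02 := hanti 0 2 (by decide)
  have h12 := hanti 1 2 (by decide)
  have := k01 0 1 (by decide)
  have := k01 0 2 (by decide)
  have := k01 1 0 (by decide)
  have := k01 1 2 (by decide)
  have := k01 2 0 (by decide)
  have := k01 2 1 (by decide)
  have := k02 0 1 (by decide)
  have := k02 0 2 (by decide)
  have := k02 1 0 (by decide)
  have := k02 1 2 (by decide)
  have := k02 2 0 (by decide)
  have := k02 2 1 (by decide)
  have := k12 0 1 (by decide)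
  have := k12 0 2 (by decide)
  have := k12 1 0 (by decide)
  have := k12 1 2 (by decide)
  have := k12 2 0 (by decide)
  have := k12 2 1 (by decide)
  omega

theorem joinedIn_of_isPreconnected_subset {U K : Set ℂ} (hU : IsOpen U) (hK : IsPreconnected K)
    (hKU : K ⊆ U) {x y : ℂ} (hx : x ∈ K) (hy : y ∈ K) : JoinedIn U x y := by
  have hconn : IsConnected (connectedComponentIn U x) :=
    isConnected_connectedComponentIn_iff.2 (hKU hx)
  have hpath := hU.connectedComponentIn.isConnected_iff_isPathConnected.1 hconn
  exact (hpath.joinedIn x (mem_connectedComponentIn (hKU hx)) y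
    (hK.subset_connectedComponentIn hx hKU hy)).mono (connectedComponentIn_subset U x)

/-- A continuum joining two disjoint closed sets `A₁` and `A₂` can be replaced, in any of its
neighbourhoods, by an arc with a point `y` equidistant from both sets that splits the arc into a
part missing `A₂` and a part missing `A₁`. -/
theorem exists_split_arc {A₁ A₂ U B : Set ℂ} (h₁ : IsClosed A₁) (h₂ : IsClosed A₂)
    (hA : Disjoint A₁ A₂) (hU : IsOpen U) (hB : IsPreconnected B) (hBU : B ⊆ U)
    (hB₁ : (A₁ ∩ B).Nonempty) (hB₂ : (A₂ ∩ B).Nonempty) :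
    ∃ p y r : ℂ, ∃ J₁ J₂ : Set ℂ, p ∈ A₁ ∧ r ∈ A₂ ∧ infDist y A₁ = infDist y A₂ ∧
      IsCompact J₁ ∧ IsCompact J₂ ∧ J₁ ⊆ U ∧ J₂ ⊆ U ∧ JoinedIn J₁ p y ∧ JoinedIn J₂ r y ∧
      Disjoint J₁ A₂ ∧ Disjoint J₂ A₁ := by
  obtain ⟨u, hu₁, huB⟩ := hB₁
  obtain ⟨v, hv₂, hvB⟩ := hB₂
  obtain ⟨γ, hγ⟩ := joinedIn_of_isPreconnected_subset hU hB hBU huB hvB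
  obtain ⟨t₁, ht₁, hmin⟩ := (h₂.preimage γ.continuous).isCompact.exists_isLeast
    ⟨1, by simpa using hv₂⟩
  obtain ⟨t₀, ⟨ht₀, ht₀₁⟩, hmax⟩ :=
    ((h₁.preimage γ.continuous).inter isClosed_Iic).isCompact.exists_isGreatest
    (s := γ ⁻¹' A₁ ∩ Iic t₁) ⟨0, by simpa using hu₁, unitInterval.nonneg'⟩
  have hf : Continuous fun t => infDist (γ t) A₁ - infDist (γ t) A₂ :=
    ((continuous_infDist_pt _).comp γ.continuous).sub
      ((continuous_infDist_pt _).comp γ.continuous)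
  obtain ⟨s, ⟨hs₀, hs₁⟩, hs⟩ := intermediate_value_Icc ht₀₁ hf.continuousOn
    (show (0 : ℝ) ∈ _ by
      rw [mem_Icc, infDist_zero_of_mem (mem_preimage.1 ht₀),
        infDist_zero_of_mem (mem_preimage.1 ht₁)]
      simp [infDist_nonneg])
  have hs : infDist (γ s) A₁ = infDist (γ s) A₂ := sub_eq_zero.1 hs
  have hs_notMem₁ : γ s ∉ A₁ := fun h => by
    rw [infDist_zero_of_mem h] at hs
    exact Set.disjoint_left.1 hA h ((h₂.mem_iff_infDist_zero ⟨v, hv₂⟩).2 hs.symm)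
  have hs_notMem₂ : γ s ∉ A₂ := fun h => by
    rw [infDist_zero_of_mem h] at hs
    exact Set.disjoint_left.1 hA ((h₁.mem_iff_infDist_zero ⟨u, hu₁⟩).2 hs) h
  have joined : ∀ a b : I, a ≤ b → IsPathConnected (γ '' Icc a b) := fun a b hab => by
    have : IsPathConnected (γ.extend '' Icc (a : ℝ) b) :=
      ((convex_Icc (a : ℝ) b).isPathConnected (nonempty_Icc.2 hab)).image γ.continuous_extend
    convert this using 1
    ext z
    constructor
    · rintro ⟨t, ht, rfl⟩
      exact ⟨t, ht, by simp⟩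
    · rintro ⟨t, ht, rfl⟩
      have htI : t ∈ I := ⟨a.2.1.trans ht.1, ht.2.trans b.2.2⟩
      exact ⟨⟨t, htI⟩, ht, (γ.extend_apply htI).symm⟩
  refine ⟨γ t₀, γ s, γ t₁, γ '' Icc t₀ s, γ '' Icc s t₁, ht₀, ht₁, hs,
    isCompact_Icc.image γ.continuous, isCompact_Icc.image γ.continuous,
    image_subset_iff.2 fun t _ => hγ t, image_subset_iff.2 fun t _ => hγ t,
    (joined _ _ hs₀).joinedIn _ (mem_image_of_mem _ (left_mem_Icc.2 hs₀)) _
      (mem_image_of_mem _ (right_mem_Icc.2 hs₀)),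
    (joined _ _ hs₁).joinedIn _ (mem_image_of_mem _ (right_mem_Icc.2 hs₁)) _
      (mem_image_of_mem _ (left_mem_Icc.2 hs₁)), ?_, ?_⟩
  · rw [Set.disjoint_left]
    rintro _ ⟨t, ht, rfl⟩ h
    have : t = s := le_antisymm ht.2 (hs₁.trans (hmin h))
    exact hs_notMem₂ (this ▸ h)
  · rw [Set.disjoint_left]
    rintro _ ⟨t, ht, rfl⟩ h
    have : t = s := le_antisymm ((hmax ⟨h, ht.2⟩).trans hs₀) ht.1
    exact hs_notMem₁ (this ▸ h)

/-- A compact subset of the closure of a connected open set `O` is approximated by a continuum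
contained in `O`. -/
theorem exists_continuum_subset_thickening {X O : Set ℂ} (hX : IsCompact X) (hO : IsOpen O)
    (hOc : IsConnected O) (hXO : X ⊆ closure O) {r : ℝ} (hr : 0 < r) :
    ∃ M ⊆ O, IsCompact M ∧ IsConnected M ∧ X ⊆ thickening r M := by
  obtain ⟨q, hq⟩ := hOc.nonempty
  have hcover : X ⊆ ⋃ v : O, ball (v : ℂ) r := fun x hx => by
    obtain ⟨v, hv, hxv⟩ := Metric.mem_closure_iff.1 (hXO hx) r hr
    exact mem_iUnion.2 ⟨⟨v, hv⟩, hxv⟩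
  obtain ⟨t, ht⟩ := hX.elim_finite_subcover _ (fun _ => isOpen_ball) hcover
  have hpath := hO.isConnected_iff_isPathConnected.1 hOc
  choose γ hγ using fun v : O => hpath.joinedIn q hq v v.2
  refine ⟨{q} ∪ ⋃ v ∈ t, range (γ v), ?_, ?_, ⟨⟨q, .inl rfl⟩, ?_⟩, ?_⟩
  · rintro z (rfl | hz)
    · exact hq
    · obtain ⟨v, -, s, rfl⟩ := mem_iUnion₂.1 hz
      exact hγ v s
  · exact isCompact_singleton.union
      (t.isCompact_biUnion fun v _ => isCompact_range (γ v).continuous)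
  · refine isPreconnected_of_forall q ?_
    rintro z (rfl | hz)
    · exact ⟨{z}, subset_union_left, rfl, rfl, isPreconnected_singleton⟩
    · obtain ⟨v, hv, hz⟩ := mem_iUnion₂.1 hz
      exact ⟨range (γ v), fun w hw => .inr (mem_biUnion hv hw), ⟨0, by simp⟩, hz,
        isPreconnected_range (γ v).continuous⟩
  · intro x hx
    obtain ⟨v, hv, hxv⟩ := mem_iUnion₂.1 (ht hx)
    exact mem_thickening_iff.2 ⟨v, .inr (mem_biUnion hv ⟨1, by simp⟩), hxv⟩

theorem Unshielded.exists_isOpen_isConnected {X : Set ℂ} (hXc : IsCompact X) (hXu : Unshielded X) :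
    ∃ O : Set ℂ, IsOpen O ∧ IsConnected O ∧ Disjoint O X ∧ X ⊆ closure O := by
  obtain ⟨R, hR⟩ := hXc.isBounded.exists_norm_le
  have hH : {z : ℂ | R < z.re} ⊆ Xᶜ := fun z hz hzX =>
    absurd (hR z hzX) (not_le.2 (lt_of_lt_of_le hz (Complex.re_le_norm z)))
  have hz : ((R + 1 : ℝ) : ℂ) ∈ {z : ℂ | R < z.re} := by simp
  have hunb : ¬Bornology.IsBounded (connectedComponentIn Xᶜ ((R + 1 : ℝ) : ℂ)) := fun hb => by
    obtain ⟨C, hC⟩ := hb.exists_norm_le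
    have hsub := (convex_halfSpace_re_gt R).isPreconnected.subset_connectedComponentIn hz hH
    have hw : ((max R C + 1 : ℝ) : ℂ) ∈ {z : ℂ | R < z.re} := by
      simp only [mem_ofPred_eq, Complex.ofReal_re]
      linarith [le_max_left R C]
    have h1 := (Complex.re_le_norm _).trans (hC _ (hsub hw))
    rw [Complex.ofReal_re] at h1
    linarith [le_max_right R C]
  refine ⟨connectedComponentIn Xᶜ ((R + 1 : ℝ) : ℂ), hXc.isClosed.isOpen_compl.connectedComponentIn,
    isConnected_connectedComponentIn_iff.2 (hH hz),
    Set.disjoint_left.2 fun z hz => connectedComponentIn_subset _ _ hz, ?_⟩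
  exact (hXu _ (hH hz) hunb).subset.trans frontier_subset_closure

theorem eventually_disjoint_thickening_s11 {s t : Set ℂ} (hs : IsCompact s) (ht : IsCompact t)
    (h : Disjoint s t) : ∀ᶠ r : ℝ in 𝓝[>] 0, Disjoint (thickening r s) (thickening r t) := by
  obtain ⟨δ, hδ, hd⟩ := h.exists_thickenings hs ht.isClosed
  filter_upwards [Ioo_mem_nhdsGT hδ] with r hr
  exact hd.mono (thickening_mono hr.2.le _) (thickening_mono hr.2.le _)

/-- Three pairwise disjoint subcontinua of an unshielded compactum cannot all meet two further
disjoint subcontinua. -/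
theorem Unshielded.not_three_continua_meet_two {X : Set ℂ} (hXc : IsCompact X) (hXu : Unshielded X)
    {A₁ A₂ : Set ℂ} {B : Fin 3 → Set ℂ} (h₁ : IsCompact A₁) (h₂ : IsCompact A₂)
    (hc₁ : IsPreconnected A₁) (hc₂ : IsPreconnected A₂) (hX₁ : A₁ ⊆ X) (hX₂ : A₂ ⊆ X)
    (hA : Disjoint A₁ A₂) (hB : ∀ j, IsCompact (B j)) (hBc : ∀ j, IsPreconnected (B j))
    (hBX : ∀ j, B j ⊆ X) (hBd : Pairwise (Disjoint on B)) (hB₁ : ∀ j, (A₁ ∩ B j).Nonempty)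
    (hB₂ : ∀ j, (A₂ ∩ B j).Nonempty) : False := by
  obtain ⟨O, hO, hOc, hOX, hXO⟩ := hXu.exists_isOpen_isConnected hXc
  have hev : ∀ᶠ r : ℝ in 𝓝[>] 0, ∀ j k, j ≠ k →
      Disjoint (thickening r (B j)) (thickening r (B k)) :=
    eventually_all.2 fun j => eventually_all.2 fun k => by
      by_cases hjk : j = k
      · exact .of_forall fun r h => absurd hjk h
      · exact (eventually_disjoint_thickening_s11 (hB j) (hB k) (hBd hjk)).mono fun r h _ => h
  obtain ⟨ρ, ⟨hρA, hρB⟩, hρ⟩ := ((eventually_disjoint_thickening_s11 h₁ h₂ hA).and hev |>.and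
    self_mem_nhdsWithin).exists
  have hρ : 0 < ρ := hρ
  obtain ⟨r, hr, rfl⟩ : ∃ r, 0 < r ∧ 2 * r = ρ := ⟨ρ / 2, by linarith, by ring⟩
  obtain ⟨M, hMO, hM, hMc, hXM⟩ := exists_continuum_subset_thickening hXc hO hOc hXO hr
  obtain ⟨d, ⟨hdX, hdr⟩, hd⟩ := ((eventually_disjoint_thickening_s11 hXc hM
    (hOX.symm.mono_right hMO)).and (Ioo_mem_nhdsGT hr)).and self_mem_nhdsWithin |>.exists
  have hd : 0 < d := hd
  have hdM : Disjoint (thickening d X) M := hdX.mono_right (self_subset_thickening hd M)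
  have hMX : Disjoint M X := hdM.symm.mono_right (self_subset_thickening hd X)
  choose p y s J₁ J₂ hp hs hy hJ₁ hJ₂ hJU₁ hJU₂ hpy hsy hJA₁ hJA₂ using fun j =>
    exists_split_arc h₁.isClosed h₂.isClosed hA (isOpen_thickening (δ := d)) (hBc j)
      (self_subset_thickening hd (B j)) (hB₁ j) (hB₂ j)
  have hUd : ∀ j k, j ≠ k → Disjoint (thickening d (B j)) (thickening d (B k)) := fun j k hjk =>
    (hρB j k hjk).mono (thickening_mono (by linarith [hdr.2]) _)
      (thickening_mono (by linarith [hdr.2]) _)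
  obtain ⟨q, hq⟩ := hMc.nonempty
  have hout : ∀ j, JoinedIn (A₁ ∪ A₂ ∪ ⋃ k ∈ {k | k ≠ j}, (J₁ k ∪ J₂ k))ᶜ q (y j) := fun j => by
    obtain ⟨x, hxB, hyx⟩ := mem_thickening_iff.1 (hJU₁ j (hpy j).target_mem)
    obtain ⟨v, hvM, hxv⟩ := mem_thickening_iff.1 (hXM (hBX j hxB))
    have hyball : y j ∈ ball x r := mem_ball.2 (hyx.trans hdr.2)
    have hdist : ∀ z ∈ ball x r, dist (y j) z < 2 * r := fun z hz => by
      linarith [dist_triangle_right (y j) z x, mem_ball.1 hz, mem_ball.1 hyball]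
    have hne₁ : A₁.Nonempty := (hB₁ j).mono inter_subset_left
    have hne₂ : A₂.Nonempty := (hB₂ j).mono inter_subset_left
    have hball : ¬ infDist (y j) A₁ < 2 * r := fun h =>
      Set.disjoint_left.1 hρA ((mem_thickening_iff_infDist_lt hne₁).2 h)
        ((mem_thickening_iff_infDist_lt hne₂).2 (hy j ▸ h))
    refine joinedIn_of_isPreconnected_subset (K := M ∪ ball x r) ?_ ?_ ?_ (.inl hq) (.inr hyball)
    · refine (((h₁.union h₂).union ?_).isClosed).isOpen_compl
      exact (toFinite _).isCompact_biUnion fun k _ => (hJ₁ k).union (hJ₂ k)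
    · exact hMc.isPreconnected.union v hvM (by simpa [dist_comm] using hxv)
        (convex_ball x r).isPreconnected
    · rintro z hz ((hzA | hzA) | hzJ)
      · rcases hz with hz | hz
        · exact Set.disjoint_left.1 hMX hz (hX₁ hzA)
        · exact hball ((infDist_le_dist_of_mem hzA).trans_lt (hdist z hz))
      · rcases hz with hz | hz
        · exact Set.disjoint_left.1 hMX hz (hX₂ hzA)
        · exact hball (hy j ▸ (infDist_le_dist_of_mem hzA).trans_lt (hdist z hz))
      · obtain ⟨k, hkj, hzJ⟩ := mem_iUnion₂.1 hzJ
        have hzU : z ∈ thickening d (B k) := union_subset (hJU₁ k) (hJU₂ k) hzJ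
        rcases hz with hz | hz
        · exact Set.disjoint_left.1 hdM (thickening_subset_of_subset d (hBX k) hzU) hz
        · exact Set.disjoint_left.1 (hρB k j hkj)
            (thickening_mono (by linarith [hdr.2]) _ hzU)
            (mem_thickening_iff.2 ⟨x, hxB, (mem_ball.1 hz).trans (by linarith)⟩)
  choose γ hγ using hout
  obtain ⟨a₁, ha₁⟩ : A₁.Nonempty := (hB₁ 0).mono inter_subset_left
  obtain ⟨a₂, ha₂⟩ : A₂.Nonempty := (hB₂ 0).mono inter_subset_left
  have hγc : IsCompact (⋃ k, range (γ k)) := isCompact_iUnion fun k => isCompact_range (γ k).continuous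
  have hγmem : ∀ {k z}, z ∈ range (γ k) → z ∉ A₁ ∧ z ∉ A₂ ∧ ∀ l, l ≠ k → z ∉ J₁ l ∧ z ∉ J₂ l := by
    rintro k _ ⟨t, rfl⟩
    have := hγ k t
    simp only [mem_compl_iff, mem_union, mem_iUnion, mem_ofPred_eq, not_or, not_exists] at this
    exact ⟨this.1.1, this.1.2, fun l hl => this.2 l hl⟩
  have hα₁ : ∀ j, JoinedIn (A₂ ∪ ((⋃ k, J₂ k) ∪ ⋃ k, range (γ k)))ᶜ a₁ (p j) := fun j => by
    refine joinedIn_of_isPreconnected_subset ?_ hc₁ ?_ ha₁ (hp j)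
    · exact (h₂.union ((isCompact_iUnion hJ₂).union hγc)).isClosed.isOpen_compl
    · rintro z hz (hzA | hzJ | hzγ)
      · exact Set.disjoint_left.1 hA hz hzA
      · obtain ⟨k, hk⟩ := mem_iUnion.1 hzJ
        exact Set.disjoint_left.1 (hJA₂ k) hk hz
      · obtain ⟨k, hk⟩ := mem_iUnion.1 hzγ
        exact (hγmem hk).1 hz
  choose α₁ hα₁ using hα₁
  have hα₂ : ∀ j, JoinedIn ((⋃ k, range (α₁ k)) ∪ ((⋃ k, J₁ k) ∪ ⋃ k, range (γ k)))ᶜ a₂ (s j) :=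
    fun j => by
    refine joinedIn_of_isPreconnected_subset ?_ hc₂ ?_ ha₂ (hs j)
    · exact ((isCompact_iUnion fun k => isCompact_range (α₁ k).continuous).union
        ((isCompact_iUnion hJ₁).union hγc)).isClosed.isOpen_compl
    · rintro z hz (hzA | hzJ | hzγ)
      · obtain ⟨k, t, rfl⟩ := mem_iUnion.1 hzA
        exact hα₁ k t (.inl hz)
      · obtain ⟨k, hk⟩ := mem_iUnion.1 hzJ
        exact Set.disjoint_left.1 (hJA₁ k) hk hz
      · obtain ⟨k, hk⟩ := mem_iUnion.1 hzγ
        exact (hγmem hk).2.1 hz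
  choose α₂ hα₂ using hα₂
  let E : Fin 3 → Fin 3 → Set ℂ :=
    ![fun j => range (α₁ j) ∪ J₁ j, fun j => range (α₂ j) ∪ J₂ j, fun j => range (γ j)]
  have hE : ∀ i j, JoinedIn (E i j) (![a₁, a₂, q] i) (y j) := fun i j => by
    have hr : ∀ {u v : ℂ} (δ : Path u v), JoinedIn (range δ) u v := fun δ => ⟨δ, mem_range_self⟩
    fin_cases i
    · exact ((hr (α₁ j)).mono subset_union_left).trans ((hpy j).mono subset_union_right)
    · exact ((hr (α₂ j)).mono subset_union_left).trans ((hsy j).mono subset_union_right)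
    · exact hr (γ j)
  have hα₁' : ∀ {k z}, z ∈ range (α₁ k) → ∀ l, z ∉ J₂ l ∧ z ∉ range (γ l) := by
    rintro k _ ⟨t, rfl⟩ l
    exact ⟨fun h => hα₁ k t (.inr (.inl (mem_iUnion.2 ⟨l, h⟩))),
      fun h => hα₁ k t (.inr (.inr (mem_iUnion.2 ⟨l, h⟩)))⟩
  have hα₂' : ∀ {k z}, z ∈ range (α₂ k) → ∀ l, z ∉ range (α₁ l) ∧ z ∉ J₁ l ∧ z ∉ range (γ l) := by
    rintro k _ ⟨t, rfl⟩ l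
    exact ⟨fun h => hα₂ k t (.inl (mem_iUnion.2 ⟨l, h⟩)),
      fun h => hα₂ k t (.inr (.inl (mem_iUnion.2 ⟨l, h⟩))),
      fun h => hα₂ k t (.inr (.inr (mem_iUnion.2 ⟨l, h⟩)))⟩
  have h01 : ∀ j l, j ≠ l → Disjoint (E 0 j) (E 1 l) := fun j l hjl => by
    rw [Set.disjoint_left]
    rintro z (hz | hz) (hz' | hz')
    · exact (hα₂' hz' j).1 hz
    · exact (hα₁' hz l).1 hz'
    · exact (hα₂' hz' j).2.1 hz
    · exact Set.disjoint_left.1 (hUd j l hjl) (hJU₁ j hz) (hJU₂ l hz')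
  have h02 : ∀ j l, j ≠ l → Disjoint (E 0 j) (E 2 l) := fun j l hjl => by
    rw [Set.disjoint_left]
    rintro z (hz | hz) hz'
    · exact (hα₁' hz l).2 hz'
    · exact ((hγmem hz').2.2 j hjl).1 hz
  have h12 : ∀ j l, j ≠ l → Disjoint (E 1 j) (E 2 l) := fun j l hjl => by
    rw [Set.disjoint_left]
    rintro z (hz | hz) hz'
    · exact (hα₂' hz l).2.2 hz'
    · exact ((hγmem hz').2.2 j hjl).2 hz
  have hEd : ∀ i j k l, i ≠ k → j ≠ l → Disjoint (E i j) (E k l) := fun i j k l hik hjl => by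
    fin_cases i <;> fin_cases k
    · exact absurd rfl hik
    · exact h01 j l hjl
    · exact h02 j l hjl
    · exact (h01 l j hjl.symm).symm
    · exact absurd rfl hik
    · exact h12 j l hjl
    · exact (h02 l j hjl.symm).symm
    · exact (h12 l j hjl.symm).symm
    · exact absurd rfl hik
  choose e he using hE
  exact not_planar_K33 e fun i j k l hik hjl =>
    (hEd i j k l hik hjl).mono (range_subset_iff.2 (he i j)) (range_subset_iff.2 (he k l))

theorem eventually_exists_dist_lt {Y : Type*} [MetricSpace Y] {K : ℕ → Set Y} {C : Set Y}
    (h : Tendsto (fun n => hausdorffEDist (K n) C) atTop (𝓝 0)) {δ : ℝ} (hδ : 0 < δ) :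
    ∀ᶠ n in atTop, (∀ x ∈ K n, ∃ c ∈ C, dist x c < δ) ∧ ∀ c ∈ C, ∃ x ∈ K n, dist c x < δ := by
  filter_upwards [h.eventually (gt_mem_nhds (ENNReal.ofReal_pos.2 hδ))] with n hn
  constructor
  · intro x hx
    obtain ⟨c, hc, hxc⟩ := exists_edist_lt_of_hausdorffEDist_lt hx hn
    exact ⟨c, hc, by rwa [edist_dist, ENNReal.ofReal_lt_ofReal_iff hδ] at hxc⟩
  · intro c hc
    obtain ⟨x, hx, hxc⟩ := exists_edist_lt_of_hausdorffEDist_lt hc (hausdorffEDist_comm.trans_lt hn)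
    exact ⟨x, hx, by rwa [edist_dist, ENNReal.ofReal_lt_ofReal_iff hδ] at hxc⟩

theorem isPreconnected_of_tendsto_hausdorffEDist {Y : Type*} [MetricSpace Y] {K : ℕ → Set Y}
    {C : Set Y} (hK : ∀ n, IsConnected (K n)) (hC : IsCompact C)
    (h : Tendsto (fun n => hausdorffEDist (K n) C) atTop (𝓝 0)) : IsPreconnected C := by
  rw [isPreconnected_iff_subset_of_fully_disjoint_closed hC.isClosed]
  intro u v hu hv huv hd
  by_contra! hcon
  obtain ⟨⟨a, haC, hau⟩, ⟨b, hbC, hbv⟩⟩ :=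
    And.intro (not_subset.1 hcon.1) (not_subset.1 hcon.2)
  have hav : a ∈ v := (huv haC).resolve_left hau
  have hbu : b ∈ u := (huv hbC).resolve_right hbv
  obtain ⟨δ, hδ, hdis⟩ := (hd.mono inter_subset_right inter_subset_right :
    Disjoint (C ∩ u) (C ∩ v)).exists_thickenings (hC.inter_right hu) (hC.inter_right hv).isClosed
  obtain ⟨n, hn₁, hn₂⟩ := (eventually_exists_dist_lt h hδ).exists
  have hcov : K n ⊆ thickening δ (C ∩ u) ∪ thickening δ (C ∩ v) := fun x hx => by
    obtain ⟨c, hc, hxc⟩ := hn₁ x hx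
    exact (huv hc).imp (fun h => mem_thickening_iff.2 ⟨c, ⟨hc, h⟩, hxc⟩)
      fun h => mem_thickening_iff.2 ⟨c, ⟨hc, h⟩, hxc⟩
  obtain ⟨x, hx, hax⟩ := hn₂ a haC
  obtain ⟨y, hy, hby⟩ := hn₂ b hbC
  obtain ⟨z, -, hzu, hzv⟩ := (hK n).isPreconnected _ _ isOpen_thickening isOpen_thickening hcov
    ⟨y, hy, mem_thickening_iff.2 ⟨b, ⟨hbC, hbu⟩, by rwa [dist_comm]⟩⟩
    ⟨x, hx, mem_thickening_iff.2 ⟨a, ⟨haC, hav⟩, by rwa [dist_comm]⟩⟩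
  exact Set.disjoint_left.1 hdis hzu hzv

/-- Every sequence of continua in a compact metric space has a subsequence converging to a
continuum in the Hausdorff metric. -/
theorem exists_subseq_tendsto_hausdorffEDist {Y : Type*} [MetricSpace Y] [CompactSpace Y]
    {K : ℕ → Set Y} (hK : ∀ n, IsCompact (K n) ∧ IsConnected (K n)) :
    ∃ φ : ℕ → ℕ, StrictMono φ ∧ ∃ C : Set Y, IsCompact C ∧ IsConnected C ∧
      Tendsto (fun n => hausdorffEDist (K (φ n)) C) atTop (𝓝 0) := by
  let K' : ℕ → TopologicalSpace.NonemptyCompacts Y :=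
    fun n => ⟨⟨K n, (hK n).1⟩, (hK n).2.nonempty⟩
  obtain ⟨C, φ, hφ, hC⟩ := CompactSpace.tendsto_subseq K'
  have h : Tendsto (fun n => hausdorffEDist (K (φ n)) (C : Set Y)) atTop (𝓝 0) :=
    tendsto_iff_edist_tendsto_0.1 hC
  exact ⟨φ, hφ, C, C.isCompact, ⟨C.nonempty,
    isPreconnected_of_tendsto_hausdorffEDist (fun n => (hK (φ n)).2) C.isCompact h⟩, h⟩

theorem finestRel_equivalence {Y : Type*} [TopologicalSpace Y] (A : Set (Set Y)) :
    Equivalence (finestRel A) where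
  refl x _ hr _ := hr.refl x
  symm h r hr hA := hr.symm (h r hr hA)
  trans h h' r hr hA := hr.trans (h r hr hA) (h' r hr hA)

theorem finestRel_respects {Y : Type*} [TopologicalSpace Y] (A : Set (Set Y)) :
    Respects A (finestRel A) := by
  refine ⟨?_, fun a ha x hx y hy r _ hA => hA.2 a ha x hx y hy⟩
  have : {p : Y × Y | finestRel A p.1 p.2} =
      ⋂ (r : Y → Y → Prop) (_ : Equivalence r) (_ : Respects A r), {p : Y × Y | r p.1 p.2} := by
    ext p; simp [finestRel]
  rw [ClosedRel, this]
  exact isClosed_iInter fun r => isClosed_iInter fun _ => isClosed_iInter fun hA => hA.1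

/-- Two points are related if a continuum inside a single class of `r` contains both. -/
def connRel {Y : Type*} [TopologicalSpace Y] (r : Y → Y → Prop) : Y → Y → Prop :=
  fun x y => ∃ C : Set Y, IsPreconnected C ∧ x ∈ C ∧ y ∈ C ∧ ∀ c ∈ C, r x c

theorem connRel_equivalence {Y : Type*} [TopologicalSpace Y] {r : Y → Y → Prop}
    (hr : Equivalence r) : Equivalence (connRel r) where
  refl x := ⟨{x}, isPreconnected_singleton, rfl, rfl, fun _ hc => hc ▸ hr.refl x⟩
  symm := fun ⟨C, hC, hx, hy, h⟩ => ⟨C, hC, hy, hx, fun c hc => hr.trans (hr.symm (h _ hy)) (h c hc)⟩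
  trans := fun ⟨C, hC, hx, hy, h⟩ ⟨D, hD, hy', hz, h'⟩ =>
    ⟨C ∪ D, hC.union _ hy hy' hD, .inl hx, .inr hz, fun c hc =>
      hc.elim (h c) fun hc => hr.trans (h _ hy) (h' c hc)⟩

theorem connRel_closedRel {Y : Type*} [MetricSpace Y] [CompactSpace Y] {r : Y → Y → Prop}
    (hc : ClosedRel r) : ClosedRel (connRel r) := by
  refine IsSeqClosed.isClosed fun p q hp hq => ?_
  choose K hK hx hy hr using hp
  obtain ⟨φ, hφ, C, hC, hCc, hlim⟩ := exists_subseq_tendsto_hausdorffEDist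
    (K := fun n => closure (K n)) fun n => ⟨isClosed_closure.isCompact,
      ⟨(p n).1, subset_closure (hx n)⟩, (hK n).closure⟩
  have hq' := hq.comp hφ.tendsto_atTop
  have hmem : ∀ (x : ℕ → Y) (z : Y), (∀ n, x n ∈ closure (K n)) →
      Tendsto (x ∘ φ) atTop (𝓝 z) → z ∈ C := fun x z hxK hxz => by
    rw [← hC.isClosed.closure_eq, Metric.mem_closure_iff]
    intro ε hε
    obtain ⟨n, hn, hn'⟩ := ((eventually_exists_dist_lt hlim (half_pos hε)).and
      (hxz.eventually (ball_mem_nhds z (half_pos hε)))).exists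
    obtain ⟨c, hc, hxc⟩ := hn.1 _ (hxK (φ n))
    refine ⟨c, hc, ?_⟩
    have h1 : dist (x (φ n)) z < ε / 2 := hn'
    linarith [dist_triangle_left z c (x (φ n))]
  refine ⟨C, hCc.isPreconnected,
    hmem (fun n => (p n).1) _ (fun n => subset_closure (hx n)) ((continuous_fst.tendsto _).comp hq'),
    hmem (fun n => (p n).2) _ (fun n => subset_closure (hy n)) ((continuous_snd.tendsto _).comp hq'),
    fun c hcC => ?_⟩
  have hcl : ∀ n, ∀ z ∈ closure (K n), r (p n).1 z := fun n z hz =>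
    closure_minimal (hr n) (hc.preimage (by fun_prop : Continuous fun z => ((p n).1, z))) hz
  change (q.1, c) ∈ {p : Y × Y | r p.1 p.2}
  rw [← IsClosed.closure_eq hc, Metric.mem_closure_iff]
  intro ε hε
  obtain ⟨n, hn, hn'⟩ := ((eventually_exists_dist_lt hlim hε).and
    (((continuous_fst.tendsto _).comp hq').eventually (ball_mem_nhds q.1 hε))).exists
  obtain ⟨z, hz, hcz⟩ := hn.2 c hcC
  refine ⟨((p (φ n)).1, z), hcl _ z hz, max_lt ?_ hcz⟩
  rw [dist_comm]
  exact hn'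

theorem connRel_finestRel {Y : Type*} [MetricSpace Y] [CompactSpace Y] {A : Set (Set Y)}
    (hA : ∀ a ∈ A, IsPreconnected a) {x y : Y} (h : finestRel A x y) : connRel (finestRel A) x y :=
  have hr := finestRel_respects A
  h _ (connRel_equivalence (finestRel_equivalence A)) ⟨connRel_closedRel hr.1,
    fun a ha x hx _ hy => ⟨a, hA a ha, hx, hy, fun c hc => hr.2 a ha x hx c hc⟩⟩

/-- The component of a point of a connected set `G` in a closed ball reaches the boundary sphere
unless `G` is contained in the open ball. -/
theorem exists_le_dist_connectedComponentIn_closedBall {Z : Type*} [MetricSpace Z] [CompactSpace Z]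
    {G : Set Z} (hG : IsPreconnected G) {a p : Z} {ρ : ℝ} (hp : p ∈ closedBall a ρ) (hpG : p ∈ G)
    (hGa : ¬ G ⊆ ball a ρ) : ∃ w ∈ connectedComponentIn (closedBall a ρ) p, ρ ≤ dist w a := by
  by_contra! hcon
  have : CompactSpace (closedBall a ρ) := isCompact_iff_compactSpace.1 isClosed_closedBall.isCompact
  rw [connectedComponentIn_eq_image hp] at hcon
  have hsub : connectedComponent (⟨p, hp⟩ : closedBall a ρ) ⊆ Subtype.val ⁻¹' ball a ρ :=
    fun w hw => hcon w (mem_image_of_mem _ hw)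
  rw [connectedComponent_eq_iInter_isClopen] at hsub
  obtain ⟨V, hV, hpV, hVa⟩ : ∃ V : Set (closedBall a ρ), IsClopen V ∧ ⟨p, hp⟩ ∈ V ∧
      V ⊆ Subtype.val ⁻¹' ball a ρ := by
    have H := (isOpen_ball.preimage
      continuous_subtype_val : IsOpen (Subtype.val ⁻¹' ball a ρ : Set (closedBall a ρ)))
      |>.isClosed_compl.isCompact.inter_iInter_nonempty
        (fun s : {s : Set (closedBall a ρ) // IsClopen s ∧ ⟨p, hp⟩ ∈ s} => s) fun s => s.2.1.1
    rw [← not_disjoint_iff_nonempty_inter, imp_not_comm, not_forall] at H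
    obtain ⟨si, hsi⟩ := H (disjoint_compl_left_iff_subset.2 hsub)
    refine ⟨⋂ U ∈ si, Subtype.val U, isClopen_biInter_finset fun s _ => s.2.1,
      mem_iInter₂.2 fun s _ => s.2.2, ?_⟩
    rwa [← disjoint_compl_left_iff_subset, disjoint_iff_inter_eq_empty,
      ← not_nonempty_iff_eq_empty]
  have hclosed : IsClosed (Subtype.val '' V) :=
    isClosed_closedBall.isClosedEmbedding_subtypeVal.isClosedMap V hV.1
  have hopen : IsOpen (Subtype.val '' V) := by
    obtain ⟨W, hW, rfl⟩ := isOpen_induced_iff.1 hV.2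
    have : Subtype.val '' (Subtype.val ⁻¹' W : Set (closedBall a ρ)) = W ∩ ball a ρ := by
      ext z
      constructor
      · rintro ⟨w, hw, rfl⟩
        exact ⟨hw, hVa hw⟩
      · exact fun hz => ⟨⟨z, ball_subset_closedBall hz.2⟩, hz.1, rfl⟩
    rw [this]
    exact hW.inter isOpen_ball
  exact hGa ((hG.subset_isClopen ⟨hclosed, hopen⟩ ⟨p, hpG, ⟨p, hp⟩, hpV, rfl⟩).trans
    (image_subset_iff.2 hVa))

theorem isClosed_connectedComponentIn {Z : Type*} [TopologicalSpace Z] {F : Set Z}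
    (hF : IsClosed F) (p : Z) : IsClosed (connectedComponentIn F p) := by
  by_cases hp : p ∈ F
  · rw [connectedComponentIn_eq_image hp]
    exact hF.isClosedEmbedding_subtypeVal.isClosedMap _ isClosed_connectedComponent
  · rw [connectedComponentIn_eq_empty hp]
    exact isClosed_empty

/-- The components of a closed ball that meet the concentric ball of half the radius in a point of
some connected set leaving the ball. -/
def crossingComponents {Z : Type*} [MetricSpace Z] (a : Z) (ρ : ℝ) : Set (Set Z) :=
  {K | ∃ G : Set Z, ∃ p, IsPreconnected G ∧ p ∈ G ∧ dist p a < ρ / 2 ∧ ¬ G ⊆ ball a ρ ∧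
    K = connectedComponentIn (closedBall a ρ) p}

theorem FinSus.finite_crossingComponents {Z : Type*} [MetricSpace Z] [CompactSpace Z]
    (hZ : FinSus Z) (a : Z) {ρ : ℝ} (hρ : 0 < ρ) : (crossingComponents a ρ).Finite := by
  refine hZ (ρ / 2) (half_pos hρ) _ ?_ ?_
  · rintro _ ⟨G, p, hG, hpG, hpa, hGa, rfl⟩
    have hp : p ∈ closedBall a ρ := mem_closedBall.2 (by linarith)
    obtain ⟨w, hw, hwa⟩ := exists_le_dist_connectedComponentIn_closedBall hG hp hpG hGa
    have hcpt := (isClosed_connectedComponentIn (isClosed_closedBall (x := a) (ε := ρ)) p).isCompact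
    refine ⟨hcpt, isConnected_connectedComponentIn_iff.2 hp, ?_⟩
    have := dist_le_diam_of_mem hcpt.isBounded hw (mem_connectedComponentIn hp)
    linarith [dist_triangle w p a]
  · rintro _ ⟨G, p, -, -, -, -, rfl⟩ _ ⟨G', p', -, -, -, -, rfl⟩ hne
    by_contra hd
    obtain ⟨z, hz, hz'⟩ := not_disjoint_iff.1 hd
    exact hne ((connectedComponentIn_eq hz).trans (connectedComponentIn_eq hz').symm)

/-- The preimage of a continuum under a monotone surjection of compacta is a continuum. -/
theorem isConnected_preimage_of_monotone {W Z : Type*} [TopologicalSpace W] [CompactSpace W]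
    [TopologicalSpace Z] [T2Space Z] {f : W → Z} (hf : Continuous f) (hs : Surjective f)
    (hm : ∀ z, IsConnected (f ⁻¹' {z})) {C : Set Z} (hC : IsCompact C) (hCc : IsConnected C) :
    IsCompact (f ⁻¹' C) ∧ IsConnected (f ⁻¹' C) :=
  ⟨(hC.isClosed.preimage hf).isCompact,
    (hf.isClosedMap.isQuotientMap hf hs).isCoinducing.isConnected_preimage_of_isClosed hm
      hC.isClosed hCc⟩

theorem isConnected_fiber_of_finestRel {W Y : Type*} [MetricSpace W] [CompactSpace W] {m : W → Y}
    (hms : Surjective m) {A : Set (Set W)} (hA : ∀ a ∈ A, IsPreconnected a)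
    (hfib : ∀ x y, m x = m y ↔ finestRel A x y) (y : Y) : IsConnected (m ⁻¹' {y}) := by
  obtain ⟨x, rfl⟩ := hms y
  refine ⟨⟨x, rfl⟩, isPreconnected_of_forall x fun z hz => ?_⟩
  obtain ⟨C, hC, hx, hz, h⟩ := connRel_finestRel hA ((hfib x z).1 (Eq.symm hz))
  exact ⟨C, fun c hc => ((hfib x c).2 (h c hc)).symm, hx, hz, hC⟩

/-- A monotone image of a compactum is finitely Suslinian if all limit continua are collapsed. -/
theorem FinSus.of_monotone {W Y : Type*} [MetricSpace W] [CompactSpace W] [MetricSpace Y]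
    {m : W → Y} (hmc : Continuous m) (hms : Surjective m)
    (hm : ∀ y, IsConnected (m ⁻¹' {y}))
    (hlim : ∀ C, IsLimCont C → ∀ x ∈ C, ∀ y ∈ C, m x = m y) : FinSus Y := by
  intro ε hε S hS hd
  by_contra hfin
  have hinf : S.Infinite := hfin
  let e := hinf.natEmbedding
  have hF := fun n => isConnected_preimage_of_monotone hmc hms hm (hS _ (e n).2).1
    (hS _ (e n).2).2.1
  obtain ⟨φ, hφ, C, hC, hCc, ht⟩ := exists_subseq_tendsto_hausdorffEDist hF
  have hlc : IsLimCont C := by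
    refine ⟨hC, hCc, _, fun n => hF (φ n), fun i j hij => ?_, ht⟩
    exact (hd (e (φ i)).2 (e (φ j)).2 fun h =>
      hij (hφ.injective (e.injective (Subtype.ext h)))).preimage m
  obtain ⟨c₀, hc₀⟩ := hCc.nonempty
  obtain ⟨δ, hδ, hu⟩ := Metric.uniformContinuous_iff.1
    (CompactSpace.uniformContinuous_of_continuous hmc) (ε / 4) (by positivity)
  obtain ⟨n, hn, -⟩ := (eventually_exists_dist_lt ht hδ).exists
  have hsub : (e (φ n) : Set Y) ⊆ closedBall (m c₀) (ε / 4) := by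
    intro y hy
    obtain ⟨x, rfl⟩ := hms y
    obtain ⟨c, hc, hxc⟩ := hn x hy
    rw [mem_closedBall, hlim C hlc c₀ hc₀ c hc]
    exact (hu hxc).le
  have h1 := (hS _ (e (φ n)).2).2.2
  have h2 := (diam_mono hsub isBounded_closedBall).trans (diam_closedBall (by positivity))
  linarith

/-- A monotone map of an unshielded compactum onto a finitely Suslinian compactum collapses every
limit continuum. -/
theorem Unshielded.eq_of_mem_isLimCont {X : Set ℂ} (hXc : IsCompact X) (hXu : Unshielded X)
    {Z : Type*} [MetricSpace Z] [CompactSpace Z] (hZ : FinSus Z) {φ : X → Z} (hφ : Continuous φ)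
    (hφs : Surjective φ) (hφm : ∀ z, IsConnected (φ ⁻¹' {z})) {C : Set X} (hC : IsLimCont C)
    {x y : X} (hx : x ∈ C) (hy : y ∈ C) : φ x = φ y := by
  by_contra hne
  have : CompactSpace X := isCompact_iff_compactSpace.1 hXc
  obtain ⟨-, -, F, hF, hFd, hlim⟩ := hC
  set ρ := dist (φ x) (φ y) / 3 with hρ'
  have hρ : 0 < ρ := by have := dist_pos.2 hne; positivity
  have hdisj : Disjoint (closedBall (φ x) ρ) (closedBall (φ y) ρ) :=
    closedBall_disjoint_closedBall (by linarith)
  have hnear : ∀ z ∈ C, ∀ᶠ n in atTop, ∃ w ∈ F n, dist (φ w) (φ z) < ρ / 2 := fun z hz => by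
    obtain ⟨δ, hδ, h⟩ := Metric.continuousAt_iff.1 hφ.continuousAt (ρ / 2) (half_pos hρ)
    filter_upwards [eventually_exists_dist_lt hlim hδ] with n hn
    obtain ⟨w, hw, hzw⟩ := hn.2 z hz
    exact ⟨w, hw, h (by rwa [dist_comm])⟩
  obtain ⟨N, hN⟩ := eventually_atTop.1 ((hnear x hx).and (hnear y hy))
  choose p hpF hp using fun n => (hN (N + n) (Nat.le_add_right N n)).1
  choose q hqF hq using fun n => (hN (N + n) (Nat.le_add_right N n)).2
  have hG : ∀ n, IsPreconnected (φ '' F (N + n)) := fun n =>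
    (hF _).2.isPreconnected.image φ hφ.continuousOn
  have hball : ∀ {z w}, dist w z < ρ / 2 → w ∈ closedBall z ρ := fun {z w : Z} h =>
    mem_closedBall.2 (by linarith)
  have hKx : ∀ n, connectedComponentIn (closedBall (φ x) ρ) (φ (p n)) ∈
      crossingComponents (φ x) ρ := fun n =>
    ⟨_, _, hG n, mem_image_of_mem φ (hpF n), hp n, fun h => Set.disjoint_left.1 hdisj
      (ball_subset_closedBall (h (mem_image_of_mem φ (hqF n)))) (hball (hq n)), rfl⟩
  have hKy : ∀ n, connectedComponentIn (closedBall (φ y) ρ) (φ (q n)) ∈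
      crossingComponents (φ y) ρ := fun n =>
    ⟨_, _, hG n, mem_image_of_mem φ (hqF n), hq n, fun h => Set.disjoint_left.1 hdisj
      (hball (hp n)) (ball_subset_closedBall (h (mem_image_of_mem φ (hpF n)))), rfl⟩
  have := (hZ.finite_crossingComponents (φ x) hρ).to_subtype
  have := (hZ.finite_crossingComponents (φ y) hρ).to_subtype
  let c : ℕ → crossingComponents (φ x) ρ × crossingComponents (φ y) ρ :=
    fun n => (⟨_, hKx n⟩, ⟨_, hKy n⟩)
  obtain ⟨K, hK⟩ := Finite.exists_infinite_fiber c
  let e := Infinite.natEmbedding (c ⁻¹' {K})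
  have hcx : ∀ n, c n = K → connectedComponentIn (closedBall (φ x) ρ) (φ (p n)) = K.1 :=
    fun n h => congrArg (fun k => (k.1 : Set Z)) h
  have hcy : ∀ n, c n = K → connectedComponentIn (closedBall (φ y) ρ) (φ (q n)) = K.2 :=
    fun n h => congrArg (fun k => (k.2 : Set Z)) h
  have hlift : ∀ (z w : Z), w ∈ closedBall z ρ →
      IsCompact (Subtype.val '' (φ ⁻¹' connectedComponentIn (closedBall z ρ) w)) ∧
      IsPreconnected (Subtype.val '' (φ ⁻¹' connectedComponentIn (closedBall z ρ) w)) := by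
    intro z w hw
    obtain ⟨h₁, h₂⟩ := isConnected_preimage_of_monotone hφ hφs hφm
      (isClosed_connectedComponentIn (isClosed_closedBall (x := z) (ε := ρ)) w).isCompact
      (isConnected_connectedComponentIn_iff.2 hw)
    exact ⟨h₁.image continuous_subtype_val,
      h₂.isPreconnected.image _ continuous_subtype_val.continuousOn⟩
  obtain ⟨hx₁, hx₂⟩ := hlift (φ x) (φ (p (e 0))) (hball (hp _))
  obtain ⟨hy₁, hy₂⟩ := hlift (φ y) (φ (q (e 0))) (hball (hq _))
  refine hXu.not_three_continua_meet_two hXc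
    (B := fun j : Fin 3 => Subtype.val '' F (N + e j)) hx₁ hy₁ hx₂ hy₂
    (Subtype.coe_image_subset _ _) (Subtype.coe_image_subset _ _) ?_
    (fun j => (hF _).1.image continuous_subtype_val)
    (fun j => (hF _).2.isPreconnected.image _ continuous_subtype_val.continuousOn)
    (fun j => Subtype.coe_image_subset _ _) ?_ (fun j => ?_) (fun j => ?_)
  · exact (disjoint_image_iff Subtype.val_injective).2 (Disjoint.preimage φ
      (hdisj.mono (connectedComponentIn_subset _ _) (connectedComponentIn_subset _ _)))
  · intro i j hij
    refine (disjoint_image_iff Subtype.val_injective).2 (hFd fun h => hij ?_)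
    exact Fin.ext (e.injective (Subtype.ext (Nat.add_left_cancel h)))
  · refine ⟨p (e j), mem_image_of_mem _ ?_, mem_image_of_mem _ (hpF _)⟩
    rw [hcx _ (e 0).2, ← hcx _ (e j).2]
    exact mem_connectedComponentIn (hball (hp _))
  · refine ⟨q (e j), mem_image_of_mem _ ?_, mem_image_of_mem _ (hqF _)⟩
    rw [hcy _ (e 0).2, ← hcy _ (e j).2]
    exact mem_connectedComponentIn (hball (hq _))

/-- for an unshielded planar compactum `X`, the quotient map by the finest
closed equivalence relation respecting the limit continua of `X` (realized by a continuous
surjection `m` onto a compact metric space `Y` whose fibers are exactly the classes) is the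
finest finitely Suslinian monotone model of `X`: `Y` is finitely Suslinian, `m` is monotone,
and every monotone continuous surjection of `X` onto a finitely Suslinian compactum factors
through `m`. -/
theorem finest_finitely_Suslinian_monotone_model
    (X : Set ℂ) (hXc : IsCompact X) (hXu : Unshielded X)
    {Y : Type*} [MetricSpace Y] [CompactSpace Y]
    (m : X → Y) (hmc : Continuous m) (hms : Function.Surjective m)
    (hfib : ∀ x y : X, m x = m y ↔ finestRel {C : Set X | IsLimCont C} x y) :
    FinSus Y ∧ (∀ y : Y, IsConnected (m ⁻¹' {y})) ∧
    ∀ (Z : Type) [MetricSpace Z] [CompactSpace Z], FinSus Z →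
      ∀ φ : X → Z, Continuous φ → Function.Surjective φ →
        (∀ z : Z, IsConnected (φ ⁻¹' {z})) →
        ∃ g : Y → Z, Continuous g ∧ φ = g ∘ m := by
  have : CompactSpace X := isCompact_iff_compactSpace.1 hXc
  have hA : ∀ C ∈ {C : Set X | IsLimCont C}, IsPreconnected C := fun C hC => hC.2.1.isPreconnected
  have hm := isConnected_fiber_of_finestRel hms hA hfib
  refine ⟨.of_monotone hmc hms hm fun C hC x hx y hy =>
    (hfib x y).2 ((finestRel_respects _).2 C hC x hx y hy), hm, fun Z _ _ hZ φ hφ hφs hφm => ?_⟩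
  have hr : ∀ x y, m x = m y → φ x = φ y := fun x y h =>
    (hfib x y).1 h (fun x y => φ x = φ y) ⟨fun _ => rfl, Eq.symm, Eq.trans⟩
      ⟨isClosed_eq (hφ.comp continuous_fst) (hφ.comp continuous_snd), fun C hC x hx y hy =>
        hXu.eq_of_mem_isLimCont hXc hZ hφ hφs hφm hC hx hy⟩
  have hg : φ = (φ ∘ surjInv hms) ∘ m := funext fun x => (hr _ _ (surjInv_eq hms (m x))).symm
  exact ⟨φ ∘ surjInv hms,
    (hmc.isClosedMap.isQuotientMap hmc hms).continuous_iff.2 (hg ▸ hφ), hg⟩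
end
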